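/- arXiv:1207.4047 — 7 statements merged into one kernel-verified Lean document; each statement's English description precedes it below -/
import Mathlib

section
/- Let x be a proper rational parametrization (of an infinite rational curve C ⊆ ℝⁿ), and let φ₁ and φ₂ be real Möbius transformations such that x(φ₁(t)) = x(φ₂(t)) for all but finitely many t ∈ ℝ (all four expressions being defined). Then φ₁ and φ₂ are equal as maps, i.e., φ₁(t) = φ₂(t) for every t at which both are defined. -/
open Polynomial Matrix RealInnerProductSpace

noncomputable section

/-- A rational parametrization of a curve in `ℝⁿ`: components `pᵢ/qᵢ` with `qᵢ ≠ 0` and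
`gcd(pᵢ, qᵢ) = 1`. -/
structure RatParam (n : ℕ) where
  p : Fin n → Polynomial ℝ
  q : Fin n → Polynomial ℝ
  q_ne_zero : ∀ i, q i ≠ 0
  coprime : ∀ i, IsCoprime (p i) (q i)

namespace RatParam

variable {n : ℕ}

/-- The (cofinite) set of parameters where the parametrization is defined. -/
def domain (X : RatParam n) : Set ℝ := {t | ∀ i, (X.q i).eval t ≠ 0}

/-- The value of the parametrization at a parameter `t`. -/
def eval (X : RatParam n) (t : ℝ) : EuclideanSpace ℝ (Fin n) :=
  WithLp.toLp 2 fun i => (X.p i).eval t / (X.q i).eval t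

/-- The associated rational curve: the image of the parametrization over its domain. -/
def curve (X : RatParam n) : Set (EuclideanSpace ℝ (Fin n)) := X.eval '' X.domain

/-- A parametrization is proper if it is injective outside some finite set of parameters. -/
def Proper (X : RatParam n) : Prop :=
  ∃ F : Set ℝ, F.Finite ∧ Set.InjOn X.eval (X.domain \ F)

end RatParam

/-- A real Möbius transformation `t ↦ (a t + b)/(c t + d)` with `a d - b c ≠ 0`. -/
structure Mobius where
  a : ℝ
  b : ℝ
  c : ℝ
  d : ℝ
  det_ne_zero : a * d - b * c ≠ 0

namespace Mobius

/-- The value of the Möbius transformation at `t`. -/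
def eval (φ : Mobius) (t : ℝ) : ℝ := (φ.a * t + φ.b) / (φ.c * t + φ.d)

/-- The set of parameters where the Möbius transformation is defined. -/
def domain (φ : Mobius) : Set ℝ := {t | φ.c * t + φ.d ≠ 0}

/-- A Möbius transformation is trivial if it is the identity map (where defined). -/
def IsTrivial (φ : Mobius) : Prop := ∀ t ∈ φ.domain, φ.eval t = t

/-- The identity Möbius transformation. -/
def one : Mobius := ⟨1, 0, 0, 1, by norm_num⟩

/-- Composition of Möbius transformations (via multiplication of coefficient matrices). -/
def comp (φ ψ : Mobius) : Mobius where
  a := φ.a * ψ.a + φ.b * ψ.c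
  b := φ.a * ψ.b + φ.b * ψ.d
  c := φ.c * ψ.a + φ.d * ψ.c
  d := φ.c * ψ.b + φ.d * ψ.d
  det_ne_zero := by
    have h : (φ.a * ψ.a + φ.b * ψ.c) * (φ.c * ψ.b + φ.d * ψ.d) -
        (φ.a * ψ.b + φ.b * ψ.d) * (φ.c * ψ.a + φ.d * ψ.c) =
        (φ.a * φ.d - φ.b * φ.c) * (ψ.a * ψ.d - ψ.b * ψ.c) := by ring
    rw [h]
    exact mul_ne_zero φ.det_ne_zero ψ.det_ne_zero

/-- The `k`-fold composition of a Möbius transformation with itself. -/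
def pow (φ : Mobius) : ℕ → Mobius
  | 0 => one
  | k + 1 => (pow φ k).comp φ

end Mobius

theorem Mobius.injOn_aux (φ : Mobius) : Set.InjOn φ.eval φ.domain := by
  intro s hs t ht hst
  simp only [Mobius.domain, Set.mem_setOf_eq] at hs ht
  simp only [Mobius.eval] at hst
  rw [div_eq_div_iff hs ht] at hst
  have h2 : (φ.a * φ.d - φ.b * φ.c) * (s - t) = 0 := by linear_combination hst
  rcases mul_eq_zero.mp h2 with h3 | h3
  · exact absurd h3 φ.det_ne_zero
  · linarith

theorem Mobius.finite_aux (φ : Mobius) {F : Set ℝ} (hF : F.Finite) :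
    {t | t ∈ φ.domain ∧ φ.eval t ∈ F}.Finite := by
  apply Set.Finite.of_finite_image (f := φ.eval)
  · apply hF.subset
    rintro _ ⟨t, ht, rfl⟩
    exact ht.2
  · exact φ.injOn_aux.mono fun t ht => ht.1

/-- Let `x` be a proper rational parametrization (of an infinite rational curve
`C ⊆ ℝⁿ`), and let `φ₁` and `φ₂` be real Möbius transformations such that `x(φ₁(t)) = x(φ₂(t))`
for all but finitely many `t ∈ ℝ` (all four expressions being defined). Then `φ₁` and `φ₂` are
equal as maps, i.e., `φ₁(t) = φ₂(t)` for every `t` at which both are defined. -/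
theorem statement_1 {n : ℕ} (X : RatParam n) (hX : X.Proper) (hCinf : X.curve.Infinite)
    (φ₁ φ₂ : Mobius)
    (h : {t : ℝ | t ∈ φ₁.domain ∧ t ∈ φ₂.domain ∧ φ₁.eval t ∈ X.domain ∧
      φ₂.eval t ∈ X.domain ∧ X.eval (φ₁.eval t) = X.eval (φ₂.eval t)}ᶜ.Finite) :
    ∀ t : ℝ, t ∈ φ₁.domain → t ∈ φ₂.domain → φ₁.eval t = φ₂.eval t := by
  obtain ⟨F, hF, hinj⟩ := hX
  have hB := (h.union (φ₁.finite_aux hF)).union (φ₂.finite_aux hF)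
  have hinf := hB.infinite_compl
  let P : Polynomial ℝ := (C φ₁.a * Polynomial.X + C φ₁.b) * (C φ₂.c * Polynomial.X + C φ₂.d)
    - (C φ₂.a * Polynomial.X + C φ₂.b) * (C φ₁.c * Polynomial.X + C φ₁.d)
  have hP : P = 0 := by
    apply Polynomial.eq_zero_of_infinite_isRoot
    apply hinf.mono
    intro t ht
    simp only [Set.mem_compl_iff, Set.mem_union, not_or, not_not] at ht
    obtain ⟨⟨⟨h1, h2, h3, h4, h5⟩, h6⟩, h7⟩ := ht
    have he := hinj ⟨h3, fun hf => h6 ⟨h1, hf⟩⟩ ⟨h4, fun hf => h7 ⟨h2, hf⟩⟩ h5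
    simp only [Mobius.domain, Set.mem_setOf_eq] at h1 h2
    simp only [Mobius.eval] at he
    rw [div_eq_div_iff h1 h2] at he
    simp only [Set.mem_setOf_eq, Polynomial.IsRoot, P, eval_sub, eval_mul, eval_add, eval_C, eval_X]
    linarith
  intro t h1 h2
  simp only [Mobius.domain, Set.mem_setOf_eq] at h1 h2
  simp only [Mobius.eval]
  rw [div_eq_div_iff h1 h2]
  have := congrArg (Polynomial.eval t) hP
  simp only [P, eval_sub, eval_mul, eval_add, eval_C, eval_X, eval_zero] at this
  linarith
end
end

section
/- Let x be a proper rational parametrization of an infinite rational curve C ⊆ ℝⁿ that is not contained in any affine hyperplane of ℝⁿ, let f be an isometry of ℝⁿ and φ a real Möbius transformation such that f(x(t)) = x(φ(t)) for all but finitely many t ∈ ℝ. Then for every positive integer k, the k-fold composition f^k is the identity of ℝⁿ if and only if the k-fold composition φ^k is the identity map of ℝ (where defined). -/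
open Polynomial Matrix RealInnerProductSpace

noncomputable section

namespace Mobius

theorem comp_mem (φ ψ : Mobius) {t : ℝ} (h1 : t ∈ ψ.domain) (h2 : ψ.eval t ∈ φ.domain) :
    t ∈ (φ.comp ψ).domain ∧ (φ.comp ψ).eval t = φ.eval (ψ.eval t) := by
  simp only [domain, eval, comp, Set.mem_setOf_eq] at *
  have e : (φ.c * ψ.a + φ.d * ψ.c) * t + (φ.c * ψ.b + φ.d * ψ.d) =
      (φ.c * ((ψ.a * t + ψ.b) / (ψ.c * t + ψ.d)) + φ.d) * (ψ.c * t + ψ.d) := by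
    field_simp
    ring
  have e' : (φ.a * ψ.a + φ.b * ψ.c) * t + (φ.a * ψ.b + φ.b * ψ.d) =
      (φ.a * ((ψ.a * t + ψ.b) / (ψ.c * t + ψ.d)) + φ.b) * (ψ.c * t + ψ.d) := by
    field_simp
    ring
  rw [e, e']
  exact ⟨mul_ne_zero h2 h1, mul_div_mul_right _ _ h1⟩

theorem injOn (φ : Mobius) : Set.InjOn φ.eval φ.domain := by
  intro s hs t ht h
  simp only [domain, eval, Set.mem_setOf_eq] at *
  rw [div_eq_div_iff hs ht] at h
  have : (φ.a * φ.d - φ.b * φ.c) * (s - t) = 0 := by linear_combination h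
  rcases mul_eq_zero.1 this with h | h
  · exact absurd h φ.det_ne_zero
  · linarith

/-- The preimage of a cofinite set under a Möbius transformation is cofinite. -/
theorem preimage_cofinite (φ : Mobius) {G : Set ℝ} (hG : Gᶜ.Finite)
    {H : Set ℝ} (hH : Hᶜ.Finite) (hd : H ⊆ φ.domain) :
    {t | t ∈ H ∧ φ.eval t ∈ G}ᶜ.Finite := by
  have h1 : (H ∩ φ.eval ⁻¹' Gᶜ).Finite := by
    refine Set.Finite.of_finite_image (f := φ.eval) (hG.subset ?_) ?_
    · rintro _ ⟨t, ht, rfl⟩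
      exact ht.2
    · exact φ.injOn.mono (fun t ht => hd ht.1)
  refine (hH.union h1).subset ?_
  intro t ht
  by_cases h : t ∈ H
  · exact Or.inr ⟨h, fun h' => ht ⟨h, h'⟩⟩
  · exact Or.inl h

theorem trivial_of_cofinite (φ : Mobius) {G : Set ℝ} (hG : Gᶜ.Finite)
    (h : ∀ t ∈ G, t ∈ φ.domain ∧ φ.eval t = t) : φ.IsTrivial := by
  have hinf : G.Infinite := by
    have := hG.infinite_compl
    rwa [compl_compl] at this
  have hp : (C φ.c * X ^ 2 + C (φ.d - φ.a) * X + C (-φ.b) : ℝ[X]) = 0 := by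
    apply Polynomial.eq_zero_of_infinite_isRoot
    refine hinf.mono ?_
    intro t ht
    obtain ⟨h1, h2⟩ := h t ht
    simp only [domain, eval, Set.mem_setOf_eq] at h1 h2 ⊢
    rw [div_eq_iff h1] at h2
    simp only [IsRoot.def, eval_add, eval_mul, eval_C, eval_pow, eval_X]
    linear_combination -h2
  intro t ht
  have := congrArg (Polynomial.eval t) hp
  simp only [eval_add, eval_mul, eval_C, eval_pow, eval_X, eval_zero] at this
  simp only [domain, eval, Set.mem_setOf_eq] at ht ⊢
  rw [div_eq_iff ht]
  linear_combination -this

end Mobius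

theorem RatParam.domain_cofinite {n : ℕ} (X : RatParam n) : X.domainᶜ.Finite := by
  have : X.domainᶜ ⊆ ⋃ i, {t | (X.q i).IsRoot t} := by
    intro t ht
    simp only [RatParam.domain, Set.mem_compl_iff, Set.mem_setOf_eq, not_forall, not_not] at ht
    simpa using ht
  refine (Set.finite_iUnion fun i => ?_).subset this
  exact Polynomial.finite_setOf_isRoot (X.q_ne_zero i)

theorem RatParam.continuousAt {n : ℕ} (X : RatParam n) {t : ℝ} (ht : t ∈ X.domain) :
    ContinuousAt X.eval t := by
  unfold RatParam.eval
  refine (PiLp.continuous_toLp 2 _).continuousAt.comp ?_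
  refine continuousAt_pi.2 fun i => ?_
  exact (X.p i).continuous.continuousAt.div (X.q i).continuous.continuousAt (ht i)

theorem pow_cofinite {n : ℕ} (X : RatParam n)
    (f : EuclideanSpace ℝ (Fin n) → EuclideanSpace ℝ (Fin n)) (φ : Mobius)
    (heq : {t : ℝ | t ∈ φ.domain ∧ t ∈ X.domain ∧ φ.eval t ∈ X.domain ∧
      f (X.eval t) = X.eval (φ.eval t)}ᶜ.Finite) (k : ℕ) :
    {t : ℝ | t ∈ (φ.pow k).domain ∧ t ∈ X.domain ∧ (φ.pow k).eval t ∈ X.domain ∧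
      f^[k] (X.eval t) = X.eval ((φ.pow k).eval t)}ᶜ.Finite := by
  induction k with
  | zero =>
    refine X.domain_cofinite.subset ?_
    rw [Set.compl_subset_compl]
    intro t ht
    simpa [Mobius.pow, Mobius.one, Mobius.domain, Mobius.eval] using ht
  | succ k ih =>
    refine (φ.preimage_cofinite ih heq (fun t ht => ht.1)).subset ?_
    rw [Set.compl_subset_compl]
    rintro t ⟨⟨h1, h2, h3, h4⟩, g1, g2, g3, g4⟩
    obtain ⟨c1, c2⟩ := (φ.pow k).comp_mem φ h1 g1
    refine ⟨c1, h2, ?_, ?_⟩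
    · change ((φ.pow k).comp φ).eval t ∈ _
      rwa [c2]
    · change _ = X.eval (((φ.pow k).comp φ).eval t)
      rw [c2, Function.iterate_succ_apply, h4, g4]

/-- Let `x` be a proper rational parametrization of an infinite rational curve
`C ⊆ ℝⁿ` not contained in any affine hyperplane of `ℝⁿ`, let `f` be an isometry of `ℝⁿ` and `φ`
a real Möbius transformation such that `f(x(t)) = x(φ(t))` for all but finitely many `t ∈ ℝ`.
Then for every positive integer `k`, the `k`-fold composition `f^k` is the identity of `ℝⁿ` if
and only if the `k`-fold composition `φ^k` is the identity map of `ℝ` (where defined). -/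
theorem statement_2 {n : ℕ} (X : RatParam n) (hX : X.Proper)
    (C : Set (EuclideanSpace ℝ (Fin n))) (hC : C = X.curve) (hCinf : C.Infinite)
    (hhyp : ¬ ∃ (v : EuclideanSpace ℝ (Fin n)) (r : ℝ), v ≠ 0 ∧ ∀ y ∈ C, ⟪y, v⟫ = r)
    (f : EuclideanSpace ℝ (Fin n) → EuclideanSpace ℝ (Fin n))
    (hf : Isometry f) (hbij : Function.Bijective f) (φ : Mobius)
    (heq : {t : ℝ | t ∈ φ.domain ∧ t ∈ X.domain ∧ φ.eval t ∈ X.domain ∧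
      f (X.eval t) = X.eval (φ.eval t)}ᶜ.Finite) :
    ∀ k : ℕ, 1 ≤ k → (f^[k] = id ↔ (φ.pow k).IsTrivial) := by
  intro k _
  have hk := pow_cofinite X f φ heq k
  constructor
  · intro hid
    obtain ⟨F, hF, hinj⟩ := hX
    have hFc : (Fᶜ)ᶜ.Finite := by rwa [compl_compl]
    have h1 := (φ.pow k).preimage_cofinite hFc hk (fun t ht => ht.1)
    have h2 := h1.union hF
    rw [← compl_compl ({t | _}ᶜ ∪ F)] at h2
    refine (φ.pow k).trivial_of_cofinite h2 ?_
    intro t ht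
    rw [Set.compl_union, compl_compl] at ht
    obtain ⟨⟨⟨a1, a2, a3, a4⟩, a5⟩, a6⟩ := ht
    refine ⟨a1, ?_⟩
    rw [hid, id] at a4
    exact (hinj ⟨a2, a6⟩ ⟨a3, a5⟩ a4).symm
  · intro htriv
    by_contra hne
    apply hhyp
    obtain ⟨y, hy⟩ := Function.ne_iff.1 hne
    have hg : Isometry f^[k] := by
      clear hne hy hk htriv
      rename_i hk1
      clear hk1
      induction k with
      | zero => exact isometry_id
      | succ k ih =>
        rw [Function.iterate_succ]
        exact Isometry.comp ih hf
    set g := f^[k] with hgdef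
    have hfix : ∀ p, g p = p → ⟪p, g y - y⟫ = (‖g y‖ ^ 2 - ‖y‖ ^ 2) / 2 := by
      intro p hp
      have hd := hg.dist_eq p y
      rw [hp, dist_eq_norm, dist_eq_norm] at hd
      have e1 := norm_sub_sq_real p y
      have e2 := norm_sub_sq_real p (g y)
      rw [hd] at e2
      rw [inner_sub_right]
      linarith
    refine ⟨g y - y, (‖g y‖ ^ 2 - ‖y‖ ^ 2) / 2, sub_ne_zero.2 hy, ?_⟩
    intro z hz
    rw [hC] at hz
    obtain ⟨t, ht, rfl⟩ := hz
    have hcont : ContinuousAt (fun s => ⟪X.eval s, g y - y⟫) t :=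
      (X.continuousAt ht).inner continuousAt_const
    have hev : ∀ᶠ s in nhdsWithin t {t}ᶜ,
        ⟪X.eval s, g y - y⟫ = (‖g y‖ ^ 2 - ‖y‖ ^ 2) / 2 := by
      have hmem := Filter.le_def.1 (nhdsNE_le_cofinite t) _ (Filter.mem_cofinite.2 hk)
      filter_upwards [hmem] with s hs
      obtain ⟨b1, b2, b3, b4⟩ := hs
      rw [htriv s b1] at b4
      exact hfix _ b4
    refine tendsto_nhds_unique (hcont.tendsto.mono_left nhdsWithin_le_nhds) ?_ (l := nhdsWithin t {t}ᶜ)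
    exact (tendsto_const_nhds).congr' (hev.mono fun s hs => hs.symm)
end
end

section
/- Let C ⊆ ℝ³ be an infinite rational space curve not contained in any affine plane, and suppose C is invariant under a rotation f of ℝ³ with axis L. Then f has finite order (so its rotation angle is a rational multiple of 2π); moreover, for every affine plane Π normal to L that contains a point of C not lying on L, the intersection C ∩ Π is a finite set and the order k of f satisfies k ≤ |C ∩ Π|. -/
open Polynomial Matrix RealInnerProductSpace

noncomputable section

/-- A rotation of `ℝ³`: an orientation-preserving isometry `x ↦ Q x + v` (`Q ∈ SO(3)`),
different from the identity, having a fixed point. -/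
def IsRotation (f : EuclideanSpace ℝ (Fin 3) → EuclideanSpace ℝ (Fin 3)) : Prop :=
  (∃ (Q : Matrix (Fin 3) (Fin 3) ℝ) (v : EuclideanSpace ℝ (Fin 3)),
    Q ∈ Matrix.orthogonalGroup (Fin 3) ℝ ∧ Q.det = 1 ∧ ∀ x i, f x i = Q.mulVec x i + v i) ∧
  f ≠ id ∧ ∃ p, f p = p

/-- A matrix in SO(3) fixing two vectors also fixes their cross product. -/
lemma so3_fix_cross (A : Matrix (Fin 3) (Fin 3) ℝ)
    (hA : A ∈ Matrix.orthogonalGroup (Fin 3) ℝ) (hd : A.det = 1)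
    (w z : Fin 3 → ℝ) (hw : A *ᵥ w = w) (hz : A *ᵥ z = z) :
    A *ᵥ (crossProduct w z) = crossProduct w z := by
  have h1 : A * Aᵀ = 1 := (Matrix.mem_orthogonalGroup_iff (Fin 3) ℝ).1 hA
  have h2 : A.adjugate = Aᵀ := by
    calc A.adjugate = A.adjugate * (A * Aᵀ) := by rw [h1, mul_one]
      _ = Aᵀ := by rw [← mul_assoc, Matrix.adjugate_mul, hd, one_smul, one_mul]
  have e : ∀ i j, A.adjugate i j = A j i := fun i j => by rw [h2]; rfl
  rw [Matrix.adjugate_fin_three] at e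
  have e00 := e 0 0
  have e01 := e 0 1
  have e02 := e 0 2
  have e10 := e 1 0
  have e11 := e 1 1
  have e12 := e 1 2
  have e20 := e 2 0
  have e21 := e 2 1
  have e22 := e 2 2
  simp at e00 e01 e02 e10 e11 e12 e20 e21 e22
  have key : A *ᵥ (crossProduct w z) = crossProduct (A *ᵥ w) (A *ᵥ z) := by
    ext i
    fin_cases i <;> simp [crossProduct, Matrix.mulVec, dotProduct, Fin.sum_univ_three]
    · rw [← e00, ← e10, ← e20]; ring
    · rw [← e01, ← e11, ← e21]; ring
    · rw [← e02, ← e12, ← e22]; ring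
  rw [key, hw, hz]

lemma so3_eq_one (A : Matrix (Fin 3) (Fin 3) ℝ)
    (hA : A ∈ Matrix.orthogonalGroup (Fin 3) ℝ) (hd : A.det = 1)
    (w z : Fin 3 → ℝ) (hw : A *ᵥ w = w) (hz : A *ᵥ z = z)
    (hn : crossProduct w z ≠ 0) : A = 1 := by
  have hc := so3_fix_cross A hA hd w z hw hz
  set n := crossProduct w z with hndef
  let M : Matrix (Fin 3) (Fin 3) ℝ := Matrix.of ![w, z, n]
  have hM : M * Aᵀ = M := by
    ext i j
    have : (M * Aᵀ) i j = (A *ᵥ (M i)) j := by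
      simp [Matrix.mul_apply, Matrix.mulVec, dotProduct, mul_comm]
    rw [this]
    fin_cases i
    · exact congrFun hw j
    · exact congrFun hz j
    · exact congrFun hc j
  have hdet : M.det ≠ 0 := by
    have : M.det = n 0 ^ 2 + n 1 ^ 2 + n 2 ^ 2 := by
      rw [Matrix.det_fin_three]
      simp [M, hndef, crossProduct]
      ring
    rw [this]
    intro h0
    apply hn
    ext i
    fin_cases i <;> simp <;> nlinarith [sq_nonneg (n 0), sq_nonneg (n 1), sq_nonneg (n 2)]
  have hu : IsUnit M := (Matrix.isUnit_iff_isUnit_det M).2 hdet.isUnit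
  have : Aᵀ = 1 := by
    apply hu.mul_left_cancel
    rw [hM, mul_one]
  simpa using congrArg Matrix.transpose this

/-- If `w ≠ 0` and `w × z = 0` then `z` is fixed by every matrix fixing `w`. -/
lemma fix_of_cross_eq_zero (Q : Matrix (Fin 3) (Fin 3) ℝ)
    (w z : Fin 3 → ℝ) (hw0 : w ≠ 0) (hw : Q *ᵥ w = w)
    (hn : crossProduct w z = 0) : Q *ᵥ z = z := by
  have c0 := congrFun hn 0
  have c1 := congrFun hn 1
  have c2 := congrFun hn 2
  simp [crossProduct] at c0 c1 c2
  set N := w 0 ^ 2 + w 1 ^ 2 + w 2 ^ 2 with hN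
  have hN0 : N ≠ 0 := by
    intro h0
    apply hw0
    ext i
    fin_cases i <;> simp <;> nlinarith [sq_nonneg (w 0), sq_nonneg (w 1), sq_nonneg (w 2)]
  have hz : z = ((w 0 * z 0 + w 1 * z 1 + w 2 * z 2) / N) • w := by
    ext i
    simp only [Pi.smul_apply, smul_eq_mul]
    rw [div_mul_eq_mul_div, eq_div_iff hN0, hN]
    fin_cases i <;> simp
    · linear_combination w 2 * c1 - w 1 * c2
    · linear_combination w 0 * c2 - w 2 * c0
    · linear_combination w 1 * c0 - w 0 * c1
  rw [hz, Matrix.mulVec_smul, hw]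

lemma so3_exists_fixed (Q : Matrix (Fin 3) (Fin 3) ℝ)
    (hQ : Q ∈ Matrix.orthogonalGroup (Fin 3) ℝ) (hd : Q.det = 1) :
    ∃ w : Fin 3 → ℝ, w ≠ 0 ∧ Q *ᵥ w = w := by
  have h1 : Q * Qᵀ = 1 := (Matrix.mem_orthogonalGroup_iff (Fin 3) ℝ).1 hQ
  have h : (Q - 1).det = 0 := by
    have h2 : (Q - 1) = Q * (-(Q - 1)ᵀ) := by
      rw [Matrix.transpose_sub, Matrix.transpose_one, neg_sub, mul_sub, h1, mul_one]
    have h3 : (Q - 1).det = - (Q - 1).det := by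
      conv_lhs => rw [h2]
      rw [Matrix.det_mul, hd, Matrix.det_neg, Matrix.det_transpose]
      norm_num [Fintype.card_fin]
      
    linarith
  obtain ⟨w, hw, hw'⟩ := Matrix.exists_mulVec_eq_zero_iff.2 h
  refine ⟨w, hw, ?_⟩
  rw [Matrix.sub_mulVec, Matrix.one_mulVec, sub_eq_zero] at hw'
  exact hw'

lemma inner_eq3 (x w : EuclideanSpace ℝ (Fin 3)) :
    ⟪x, w⟫ = x 0 * w 0 + x 1 * w 1 + x 2 * w 2 := by
  simp [PiLp.inner_apply, Fin.sum_univ_three, mul_comm]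

lemma slice_finite (X : RatParam 3) (w : EuclideanSpace ℝ (Fin 3)) (c : ℝ)
    (h : ¬ ∀ y ∈ X.curve, ⟪y, w⟫ = c) :
    (X.curve ∩ {x : EuclideanSpace ℝ (Fin 3) | ⟪x, w⟫ = c}).Finite := by
  let P : Polynomial ℝ :=
    Polynomial.C (w 0) * X.p 0 * X.q 1 * X.q 2 + Polynomial.C (w 1) * X.p 1 * X.q 0 * X.q 2
      + Polynomial.C (w 2) * X.p 2 * X.q 0 * X.q 1 - Polynomial.C c * X.q 0 * X.q 1 * X.q 2
  have hP : ∀ t ∈ X.domain, (⟪X.eval t, w⟫ = c ↔ P.eval t = 0) := by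
    intro t ht
    have h0 := ht 0
    have h1 := ht 1
    have h2 := ht 2
    rw [inner_eq3]
    simp only [RatParam.eval, P, Polynomial.eval_sub, Polynomial.eval_add, Polynomial.eval_mul,
      Polynomial.eval_C]
    rw [← sub_eq_zero]
    have : (X.p 0).eval t / (X.q 0).eval t * w 0 + (X.p 1).eval t / (X.q 1).eval t * w 1 +
        (X.p 2).eval t / (X.q 2).eval t * w 2 - c =
        (w 0 * (X.p 0).eval t * (X.q 1).eval t * (X.q 2).eval t
        + w 1 * (X.p 1).eval t * (X.q 0).eval t * (X.q 2).eval t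
        + w 2 * (X.p 2).eval t * (X.q 0).eval t * (X.q 1).eval t
        - c * (X.q 0).eval t * (X.q 1).eval t * (X.q 2).eval t) /
        ((X.q 0).eval t * (X.q 1).eval t * (X.q 2).eval t) := by
      field_simp
    rw [this, div_eq_zero_iff]
    simp [h0, h1, h2]
  have hP0 : P ≠ 0 := by
    intro h0
    apply h
    rintro y ⟨t, ht, rfl⟩
    rw [hP t ht, h0]; simp
  have hfin : {t | P.IsRoot t}.Finite := Polynomial.finite_setOf_isRoot hP0
  refine (hfin.image X.eval).subset ?_
  rintro y ⟨⟨t, ht, rfl⟩, hy⟩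
  exact ⟨t, (hP t ht).1 hy, rfl⟩

/-- Let `C ⊆ ℝ³` be an infinite rational space curve not contained in any affine
plane, invariant under a rotation `f` of `ℝ³` with axis `L`. Then `f` has finite order; moreover,
for every affine plane `Π` normal to `L` that contains a point of `C` not lying on `L`, the
intersection `C ∩ Π` is finite and the order `k` of `f` satisfies `k ≤ |C ∩ Π|`. -/
theorem statement_3 (X : RatParam 3) (C : Set (EuclideanSpace ℝ (Fin 3)))
    (hC : C = X.curve) (hCinf : C.Infinite)
    (hnondeg : ¬ ∃ (v : EuclideanSpace ℝ (Fin 3)) (r : ℝ), v ≠ 0 ∧ ∀ y ∈ C, ⟪y, v⟫ = r)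
    (f : EuclideanSpace ℝ (Fin 3) → EuclideanSpace ℝ (Fin 3)) (hf : IsRotation f)
    (L : Set (EuclideanSpace ℝ (Fin 3))) (hL : L = {x | f x = x})
    (hinv : f '' C = C) :
    ∃ k : ℕ, 1 ≤ k ∧ f^[k] = id ∧ (∀ m : ℕ, 1 ≤ m → f^[m] = id → k ≤ m) ∧
      ∀ (p w : EuclideanSpace ℝ (Fin 3)), w ≠ 0 → L = {x | ∃ s : ℝ, x = p + s • w} →
        ∀ c : ℝ, (∃ y ∈ C ∩ {x : EuclideanSpace ℝ (Fin 3) | ⟪x, w⟫ = c}, y ∉ L) →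
          (C ∩ {x : EuclideanSpace ℝ (Fin 3) | ⟪x, w⟫ = c}).Finite ∧
          k ≤ (C ∩ {x : EuclideanSpace ℝ (Fin 3) | ⟪x, w⟫ = c}).ncard := by
  obtain ⟨⟨Q, v, hQ, hd, hfQ⟩, hne, p0, hp0⟩ := hf
  have hQ1 : Q * Qᵀ = 1 := (Matrix.mem_orthogonalGroup_iff (Fin 3) ℝ).1 hQ
  have hQ2 : Qᵀ * Q = 1 := (Matrix.mem_orthogonalGroup_iff' (Fin 3) ℝ).1 hQ
  -- conjugated form of `f`
  have hfx : ∀ x, WithLp.ofLp (f x) = Q *ᵥ (WithLp.ofLp x - WithLp.ofLp p0) + WithLp.ofLp p0 := by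
    intro x
    ext i
    have a := hfQ x i
    have b := hfQ p0 i
    rw [hp0] at b
    rw [Matrix.mulVec_sub]
    simp only [Pi.add_apply, Pi.sub_apply]
    linarith
  have hiter : ∀ (m : ℕ) x, WithLp.ofLp (f^[m] x)
      = (Q ^ m) *ᵥ (WithLp.ofLp x - WithLp.ofLp p0) + WithLp.ofLp p0 := by
    intro m
    induction m with
    | zero => intro x; simp
    | succ m ih =>
      intro x
      rw [Function.iterate_succ_apply', hfx, ih, add_sub_cancel_right, Matrix.mulVec_mulVec,
        ← pow_succ']
  have hfix : ∀ (m : ℕ) x, f^[m] x = x ↔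
      (Q ^ m) *ᵥ (WithLp.ofLp x - WithLp.ofLp p0) = WithLp.ofLp x - WithLp.ofLp p0 := by
    intro m x
    rw [eq_sub_iff_add_eq, ← hiter]
    exact (WithLp.ofLp_injective 2).eq_iff.symm
  have hinj : Function.Injective f := by
    intro x y hxy
    have h := congrArg WithLp.ofLp hxy
    rw [hfx, hfx, add_left_inj] at h
    have h' := congrArg (fun u => Qᵀ *ᵥ u) h
    simp only [Matrix.mulVec_mulVec, hQ2, Matrix.one_mulVec, sub_left_inj] at h'
    exact WithLp.ofLp_injective 2 h'
  -- slices are preserved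
  have hinner : ∀ w : EuclideanSpace ℝ (Fin 3), Q *ᵥ WithLp.ofLp w = WithLp.ofLp w →
      ∀ x, ⟪f x, w⟫ = ⟪x, w⟫ := by
    intro w hw x
    have hw' : WithLp.ofLp w ᵥ* Q = WithLp.ofLp w := by
      rw [← Matrix.mulVec_transpose]
      conv_lhs => rw [← hw]
      rw [Matrix.mulVec_mulVec, hQ2, Matrix.one_mulVec]
    have e : ∀ z : EuclideanSpace ℝ (Fin 3), ⟪z, w⟫ = WithLp.ofLp w ⬝ᵥ WithLp.ofLp z := by
      intro z
      rw [inner_eq3]; simp [dotProduct, Fin.sum_univ_three, mul_comm]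
    rw [e, e, hfx, dotProduct_add, Matrix.dotProduct_mulVec, hw', ← dotProduct_add,
      sub_add_cancel]
  have hslice : ∀ w : EuclideanSpace ℝ (Fin 3), w ≠ 0 → ∀ c : ℝ,
      (C ∩ {x : EuclideanSpace ℝ (Fin 3) | ⟪x, w⟫ = c}).Finite := by
    intro w hw c
    rw [hC]
    apply slice_finite
    intro h
    exact hnondeg ⟨w, c, hw, by rw [hC]; exact h⟩
  have hmaps : ∀ w : EuclideanSpace ℝ (Fin 3), Q *ᵥ WithLp.ofLp w = WithLp.ofLp w → ∀ c : ℝ,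
      ∀ y ∈ C ∩ {x : EuclideanSpace ℝ (Fin 3) | ⟪x, w⟫ = c}, ∀ m : ℕ,
      f^[m] y ∈ C ∩ {x : EuclideanSpace ℝ (Fin 3) | ⟪x, w⟫ = c} := by
    intro w hw c y hy m
    induction m with
    | zero => exact hy
    | succ m ih =>
      rw [Function.iterate_succ_apply']
      refine ⟨?_, ?_⟩
      · rw [← hinv]; exact ⟨_, ih.1, rfl⟩
      · have := ih.2
        simp only [Set.mem_setOf_eq] at this ⊢
        rw [hinner w hw, this]
  -- direction of the axis
  obtain ⟨w0, hw0, hQw0⟩ := so3_exists_fixed Q hQ hd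
  -- an iterate fixing a point off the axis is the identity
  have hid : ∀ y, f y ≠ y → ∀ m : ℕ, f^[m] y = y → f^[m] = id := by
    intro y hy m hm
    have hpw : (Q ^ m) *ᵥ w0 = w0 := by
      clear hm
      induction m with
      | zero => simp
      | succ m ih => rw [pow_succ, ← Matrix.mulVec_mulVec, hQw0, ih]
    have hQm : Q ^ m = 1 := by
      refine so3_eq_one (Q ^ m) (pow_mem hQ m) (by rw [Matrix.det_pow, hd, one_pow]) w0
        (WithLp.ofLp y - WithLp.ofLp p0) hpw ((hfix m y).1 hm) ?_
      intro hc
      apply hy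
      have := (hfix 1 y).2 (by rw [pow_one]; exact fix_of_cross_eq_zero Q w0 _ hw0 hQw0 hc)
      simpa using this
    funext x
    exact (hfix m x).2 (by rw [hQm, Matrix.one_mulVec])
  -- a point of the curve off the axis
  obtain ⟨y0, hy0C, hy0⟩ : ∃ y ∈ C, f y ≠ y := by
    by_contra hcon
    push Not at hcon
    have hQne : Q ≠ 1 := by
      intro h1
      apply hne
      funext x
      exact (hfix 1 x).2 (by rw [h1, pow_one, Matrix.one_mulVec])
    obtain ⟨i, hi⟩ : ∃ i, (Q - 1) i ≠ 0 := by
      by_contra hall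
      push Not at hall
      exact hQne (sub_eq_zero.1 (funext hall))
    refine hnondeg ⟨WithLp.toLp 2 ((Q - 1) i), - v i, ?_, ?_⟩
    · intro h0
      exact hi (congrArg WithLp.ofLp h0)
    · intro y hy
      have a := hfQ y i
      rw [hcon y hy] at a
      have b : ((Q - 1) *ᵥ WithLp.ofLp y) i = - v i := by
        rw [Matrix.sub_mulVec, Matrix.one_mulVec, Pi.sub_apply]
        linarith
      rw [← b, inner_eq3]
      simp only [Matrix.mulVec, dotProduct, Fin.sum_univ_three]
      ring
  have hw0' : (WithLp.toLp 2 w0 : EuclideanSpace ℝ (Fin 3)) ≠ 0 := by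
    intro h0
    exact hw0 (congrArg WithLp.ofLp h0)
  have hper : ∃ k : ℕ, 1 ≤ k ∧ f^[k] y0 = y0 := by
    have hfinS := hslice (WithLp.toLp 2 w0) hw0' ⟪y0, WithLp.toLp 2 w0⟫
    have hm := hmaps (WithLp.toLp 2 w0) hQw0 ⟪y0, WithLp.toLp 2 w0⟫ y0 ⟨hy0C, rfl⟩
    have hni : ¬ Function.Injective (fun m : ℕ => f^[m] y0) := by
      intro hI
      exact (Set.infinite_range_of_injective hI) (hfinS.subset (by rintro _ ⟨m, rfl⟩; exact hm m))
    obtain ⟨a, b, hab, hlt⟩ : ∃ a b : ℕ, f^[a] y0 = f^[b] y0 ∧ a < b := by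
      simp only [Function.Injective] at hni
      push Not at hni
      obtain ⟨a, b, hab, hne'⟩ := hni
      rcases lt_or_gt_of_ne hne' with h | h
      · exact ⟨a, b, hab, h⟩
      · exact ⟨b, a, hab.symm, h⟩
    refine ⟨b - a, by omega, ?_⟩
    apply hinj.iterate a
    rw [← Function.iterate_add_apply, Nat.add_sub_cancel' hlt.le, hab]
  obtain ⟨k0, hk0, hk0y⟩ := hper
  have hmem : y0 ∈ Function.periodicPts f := Function.mk_mem_periodicPts hk0 hk0y
  have hmin : ∀ m : ℕ, 1 ≤ m → f^[m] = id → Function.minimalPeriod f y0 ≤ m := by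
    intro m hm hmid
    exact Function.IsPeriodicPt.minimalPeriod_le hm (congrFun hmid y0)
  refine ⟨Function.minimalPeriod f y0, Function.minimalPeriod_pos_of_mem_periodicPts hmem,
    hid y0 hy0 _ (Function.isPeriodicPt_minimalPeriod f y0), hmin, ?_⟩
  intro p w hw hLw c hex
  obtain ⟨y, hyS, hyL⟩ := hex
  have hfp : ∀ s : ℝ, f (p + s • w) = p + s • w := by
    intro s
    have : p + s • w ∈ L := by rw [hLw]; exact ⟨s, rfl⟩
    rw [hL] at this
    exact this
  have hQw : Q *ᵥ WithLp.ofLp w = WithLp.ofLp w := by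
    have h0 := (hfix 1 _).1 (hfp 0)
    have h1 := (hfix 1 _).1 (hfp 1)
    have h2 := congrArg₂ (fun a b => a - b) h1 h0
    simp only [pow_one, ← Matrix.mulVec_sub] at h2
    simpa using h2
  have hfin := hslice w hw c
  have hyne : f y ≠ y := by
    intro h
    apply hyL
    rw [hL]
    exact h
  refine ⟨hfin, ?_⟩
  have hy0id := hid y0 hy0 _ (Function.isPeriodicPt_minimalPeriod f y0)
  have hpos0 : 0 < Function.minimalPeriod f y0 :=
    Function.minimalPeriod_pos_of_mem_periodicPts hmem
  have hypos : 0 < Function.minimalPeriod f y :=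
    Function.minimalPeriod_pos_of_mem_periodicPts
      (Function.mk_mem_periodicPts hpos0 (congrFun hy0id y))
  have hle : Function.minimalPeriod f y0 ≤ Function.minimalPeriod f y :=
    hmin _ hypos (hid y hyne _ (Function.isPeriodicPt_minimalPeriod f y))
  refine hle.trans ?_
  have hinjOn : Set.InjOn (fun m : ℕ => f^[m] y) (Set.Iio (Function.minimalPeriod f y)) :=
    Function.iterate_injOn_Iio_minimalPeriod
  have hcard := Set.ncard_le_ncard_of_injOn (s := Set.Iio (Function.minimalPeriod f y))
    (fun m : ℕ => f^[m] y) (fun m _ => hmaps w hQw c y hyS m) hinjOn hfin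
  simpa [Set.ncard_eq_toFinset_card'] using hcard
end
end

section
/- Let C ⊆ ℝ³ be an infinite rational space curve that is not a line, and suppose C is invariant under two rotations f₁ and f₂ of ℝ³ with axes L₁ and L₂ respectively. If L₁ and L₂ are parallel (have the same direction), then L₁ = L₂. -/
open Polynomial Matrix RealInnerProductSpace

noncomputable section

/-- A line in `ℝⁿ`: a one-dimensional affine subspace, as a set. -/
def IsLine {n : ℕ} (S : Set (EuclideanSpace ℝ (Fin n))) : Prop :=
  ∃ (p v : EuclideanSpace ℝ (Fin n)), v ≠ 0 ∧ S = {x | ∃ s : ℝ, x = p + s • v}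

lemma cross_Q (Q : Matrix (Fin 3) (Fin 3) ℝ) (hQ : Q ∈ Matrix.orthogonalGroup (Fin 3) ℝ)
    (hd : Q.det = 1) (a b : Fin 3 → ℝ) :
    Q *ᵥ (crossProduct a b) = crossProduct (Q *ᵥ a) (Q *ᵥ b) := by
  have h1 : Q * Qᵀ = 1 := by
    have := (Matrix.mem_orthogonalGroup_iff (Fin 3) ℝ).1 hQ
    simpa [Matrix.star_eq_conjTranspose] using this
  have h2 : Qᵀ = Q.adjugate := by
    have h3 : Q.adjugate * Q = 1 := by rw [Matrix.adjugate_mul, hd, one_smul]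
    calc Qᵀ = (Q.adjugate * Q) * Qᵀ := by rw [h3, one_mul]
      _ = Q.adjugate := by rw [mul_assoc, h1, mul_one]
  rw [Matrix.adjugate_fin_three] at h2
  have e : ∀ i j, Q i j = _ := fun i j => congrFun (congrFun h2 j) i
  have e00 := e 0 0
  have e01 := e 0 1
  have e02 := e 0 2
  have e10 := e 1 0
  have e11 := e 1 1
  have e12 := e 1 2
  have e20 := e 2 0
  have e21 := e 2 1
  have e22 := e 2 2
  clear e h2
  simp at e00 e01 e02 e10 e11 e12 e20 e21 e22
  ext i
  fin_cases i
  · simp [Matrix.mulVec, dotProduct, Fin.sum_univ_three, crossProduct]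
    linear_combination (a 1 * b 2 - a 2 * b 1) * e00 + (a 2 * b 0 - a 0 * b 2) * e01 + (a 0 * b 1 - a 1 * b 0) * e02
  · simp [Matrix.mulVec, dotProduct, Fin.sum_univ_three, crossProduct]
    linear_combination (a 1 * b 2 - a 2 * b 1) * e10 + (a 2 * b 0 - a 0 * b 2) * e11 + (a 0 * b 1 - a 1 * b 0) * e12
  · simp [Matrix.mulVec, dotProduct, Fin.sum_univ_three, crossProduct]
    linear_combination (a 1 * b 2 - a 2 * b 1) * e20 + (a 2 * b 0 - a 0 * b 2) * e21 + (a 0 * b 1 - a 1 * b 0) * e22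

lemma dot_Q (Q : Matrix (Fin 3) (Fin 3) ℝ) (hQ : Q ∈ Matrix.orthogonalGroup (Fin 3) ℝ)
    (a b : Fin 3 → ℝ) : (Q *ᵥ a) ⬝ᵥ (Q *ᵥ b) = a ⬝ᵥ b := by
  have h1 : Qᵀ * Q = 1 := by
    have := (Matrix.mem_orthogonalGroup_iff' (Fin 3) ℝ).1 hQ
    simpa [Matrix.star_eq_conjTranspose] using this
  rw [Matrix.dotProduct_mulVec, Matrix.vecMul_mulVec, h1, Matrix.vecMul_one]

lemma span_perp (v u x : Fin 3 → ℝ) (hu : u ⬝ᵥ v = 0) (hx : x ⬝ᵥ v = 0) :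
    ((v ⬝ᵥ v) * (u ⬝ᵥ u)) • x = ((x ⬝ᵥ u) * (v ⬝ᵥ v)) • u +
      (x ⬝ᵥ crossProduct v u) • crossProduct v u := by
  have hu' := hu
  have hx' := hx
  simp only [dotProduct, Fin.sum_univ_three] at hu' hx'
  ext i
  fin_cases i <;>
  · simp [dotProduct, Fin.sum_univ_three, crossProduct]
    grind

lemma comm_perp (Q R : Matrix (Fin 3) (Fin 3) ℝ) (hQ : Q ∈ Matrix.orthogonalGroup (Fin 3) ℝ)
    (hd : Q.det = 1) (hR : R ∈ Matrix.orthogonalGroup (Fin 3) ℝ)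
    (hd' : R.det = 1) (v : Fin 3 → ℝ) (hv : v ≠ 0) (hQv : Q *ᵥ v = v) (hRv : R *ᵥ v = v)
    (u : Fin 3 → ℝ) (hu : u ⬝ᵥ v = 0) : Q *ᵥ (R *ᵥ u) = R *ᵥ (Q *ᵥ u) := by
  by_cases hu0 : u = 0
  · simp [hu0]
  have hvv : v ⬝ᵥ v ≠ 0 := fun h => hv (dotProduct_self_eq_zero.1 h)
  have huu : u ⬝ᵥ u ≠ 0 := fun h => hu0 (dotProduct_self_eq_zero.1 h)
  have key : ∀ S : Matrix (Fin 3) (Fin 3) ℝ, S ∈ Matrix.orthogonalGroup (Fin 3) ℝ →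
      S *ᵥ v = v → ∃ a b : ℝ, S *ᵥ u = a • u + b • crossProduct v u := by
    intro S hS hSv
    have h0 : (S *ᵥ u) ⬝ᵥ v = 0 := by
      conv_lhs => rw [← hSv]
      rw [dot_Q S hS, hu]
    have h1 := span_perp v u _ hu h0
    have hne : (v ⬝ᵥ v) * (u ⬝ᵥ u) ≠ 0 := mul_ne_zero hvv huu
    have h2 := congrArg (fun y => ((v ⬝ᵥ v) * (u ⬝ᵥ u))⁻¹ • y) h1
    simp only [smul_smul, inv_mul_cancel₀ hne, one_smul, smul_add] at h2
    exact ⟨_, _, h2⟩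
  obtain ⟨a, b, hab⟩ := key Q hQ hQv
  obtain ⟨c, d, hcd⟩ := key R hR hRv
  have hQc : Q *ᵥ (crossProduct v u) = crossProduct v (Q *ᵥ u) := by rw [cross_Q Q hQ hd, hQv]
  have hRc : R *ᵥ (crossProduct v u) = crossProduct v (R *ᵥ u) := by rw [cross_Q R hR hd', hRv]
  rw [hcd, hab]
  simp only [Matrix.mulVec_add, Matrix.mulVec_smul, hQc, hRc]
  rw [hcd, hab]
  simp only [map_add, map_smul]
  module

lemma comm_all (Q R : Matrix (Fin 3) (Fin 3) ℝ) (hQ : Q ∈ Matrix.orthogonalGroup (Fin 3) ℝ)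
    (hd : Q.det = 1) (hR : R ∈ Matrix.orthogonalGroup (Fin 3) ℝ)
    (hd' : R.det = 1) (v : Fin 3 → ℝ) (hv : v ≠ 0) (hQv : Q *ᵥ v = v) (hRv : R *ᵥ v = v)
    (u : Fin 3 → ℝ) : Q *ᵥ (R *ᵥ u) = R *ᵥ (Q *ᵥ u) := by
  have hvv : v ⬝ᵥ v ≠ 0 := fun h => hv (dotProduct_self_eq_zero.1 h)
  have h := comm_perp Q R hQ hd hR hd' v hv hQv hRv (u - ((u ⬝ᵥ v) / (v ⬝ᵥ v)) • v) (by
    rw [sub_dotProduct, smul_dotProduct, smul_eq_mul]; field_simp; ring)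
  simpa [Matrix.mulVec_sub, Matrix.mulVec_smul, hQv, hRv] using h

/-- a rational function with the same value infinitely often is constant -/
lemma const_of_inf (P D : ℝ[X]) (T : Set ℝ) (hT : T.Infinite)
    (c : ℝ) (h : ∀ t ∈ T, P.eval t = c * D.eval t) : ∀ t, P.eval t = c * D.eval t := by
  have : P = Polynomial.C c * D := by
    apply Polynomial.eq_of_infinite_eval_eq
    refine hT.mono ?_
    intro t ht
    simp [h t ht]
  intro t
  rw [this]; simp

lemma line_of_transl (X : RatParam 3) (hne : X.curve.Nonempty)
    (w : EuclideanSpace ℝ (Fin 3)) (hw : w ≠ 0)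
    (hp : ∀ y ∈ X.curve, y + w ∈ X.curve) (hm : ∀ y ∈ X.curve, y - w ∈ X.curve) :
    IsLine X.curve := by
  obtain ⟨c, hc⟩ := hne
  have hnat : ∀ (n : ℕ), ∀ y ∈ X.curve, y + (n : ℝ) • w ∈ X.curve := by
    intro n
    induction n with
    | zero => intro y hy; simpa using hy
    | succ k ih =>
      intro y hy
      have := hp _ (ih y hy)
      convert this using 1
      push_cast; module
  have hnatm : ∀ (n : ℕ), ∀ y ∈ X.curve, y - (n : ℝ) • w ∈ X.curve := by
    intro n
    induction n with
    | zero => intro y hy; simpa using hy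
    | succ k ih =>
      intro y hy
      have := hm _ (ih y hy)
      convert this using 1
      push_cast; module
  have hshift : ∀ (n : ℤ), ∀ y ∈ X.curve, y + (n : ℝ) • w ∈ X.curve := by
    intro n y hy
    obtain ⟨k, rfl | rfl⟩ := n.eq_nat_or_neg
    · simpa using hnat k y hy
    · simpa [sub_eq_add_neg] using hnatm k y hy
  obtain ⟨j, hj⟩ : ∃ j, w j ≠ 0 := by
    by_contra! hcon
    exact hw (by ext i; simpa using hcon i)
  choose t ht htc using fun n : ℤ => hshift n c hc
  have htinj : Function.Injective t := by
    intro m n hmn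
    have h1 := htc m
    rw [hmn, htc n] at h1
    have h2 : c j + n * w j = c j + m * w j := by simpa using congrArg (fun y => y j) h1
    have h3 : ((n : ℝ) - m) * w j = 0 := by linarith
    have := (mul_eq_zero.1 h3).resolve_right hj
    exact_mod_cast (sub_eq_zero.1 this).symm
  have hTinf : (Set.range t).Infinite := Set.infinite_range_of_injective htinj
  -- every point on the line
  have hsub : ∀ s ∈ X.domain, ∀ i,
      X.eval s i * w j - X.eval s j * w i = c i * w j - c j * w i := by
    intro s hs i
    have key := const_of_inf (X.p i * X.q j * Polynomial.C (w j) - X.p j * X.q i * Polynomial.C (w i))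
      (X.q i * X.q j) (Set.range t) hTinf (c i * w j - c j * w i) (by
        rintro _ ⟨n, rfl⟩
        have hi := congrArg (fun y => y i) (htc n)
        have hjj := congrArg (fun y => y j) (htc n)
        have qi := ht n i
        have qj := ht n j
        simp [RatParam.eval] at hi hjj
        rw [div_eq_iff qi] at hi
        rw [div_eq_iff qj] at hjj
        simp
        rw [hi, hjj]; ring) s
    have qi := hs i
    have qj := hs j
    simp [RatParam.eval] at key ⊢
    field_simp
    linarith
  set g : ℝ → ℝ := fun s => (X.eval s j - c j) / w j with hg
  have hpt : ∀ s ∈ X.domain, X.eval s = c + g s • w := by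
    intro s hs
    ext i
    have := hsub s hs i
    simp [hg]
    field_simp
    linarith
  have hgt : ∀ n : ℤ, g (t n) = n := by
    intro n
    simp only [hg, htc n]
    simp [hj]
  have hcont : ∀ s ∈ X.domain, ContinuousAt g s := by
    intro s hs
    have qj := hs j
    simp only [hg, RatParam.eval]
    refine ContinuousAt.div_const (ContinuousAt.sub ?_ continuousAt_const) _
    exact ContinuousAt.div (Polynomial.continuousAt _) (Polynomial.continuousAt _) qj
  let F : Finset ℝ := Finset.univ.biUnion fun i => (X.q i).roots.toFinset
  have hF : ∀ s, s ∉ F → s ∈ X.domain := by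
    intro s hs i h0
    apply hs
    simp only [F, Finset.mem_biUnion, Finset.mem_univ, true_and, Multiset.mem_toFinset]
    exact ⟨i, (Polynomial.mem_roots (X.q_ne_zero i)).2 h0⟩
  have hF' : ∀ s ∈ X.domain, s ∉ F := by
    intro s hs h
    simp only [F, Finset.mem_biUnion, Finset.mem_univ, true_and, Multiset.mem_toFinset] at h
    obtain ⟨i, hi⟩ := h
    exact hs i (Polynomial.mem_roots (X.q_ne_zero i) |>.1 hi)
  obtain ⟨m, n, hmn, hfe⟩ := Finite.exists_ne_map_eq_of_infinite
    (fun n : ℤ => (⟨F.filter (fun a => a < t n), Finset.mem_powerset.2 (Finset.filter_subset _ _)⟩ :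
      F.powerset))
  have hfe' : F.filter (fun a => a < t m) = F.filter (fun a => a < t n) := congrArg Subtype.val hfe
  have hseg : ∀ s ∈ Set.uIcc (t m) (t n), s ∈ X.domain := by
    intro s hs
    apply hF
    intro hsF
    have h1 : s < t m ↔ s < t n := by
      have := Finset.ext_iff.1 hfe' s
      simpa [hsF] using this
    have nm : s ≠ t m := fun h => hF' _ (ht m) (h ▸ hsF)
    have nn : s ≠ t n := fun h => hF' _ (ht n) (h ▸ hsF)
    rcases Set.mem_uIcc.1 hs with ⟨h2, h3⟩ | ⟨h2, h3⟩
    · exact absurd (h1.2 (lt_of_le_of_ne h3 nn)) (not_lt.2 h2)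
    · exact absurd (h1.1 (lt_of_le_of_ne h3 nm)) (not_lt.2 h2)
  have hivt := intermediate_value_uIcc (f := g) (a := t m) (b := t n)
    (fun s hs => (hcont s (hseg s hs)).continuousWithinAt)
  rw [hgt, hgt] at hivt
  refine ⟨c, w, hw, ?_⟩
  ext y
  constructor
  · rintro ⟨s, hs, rfl⟩
    exact ⟨g s, hpt s hs⟩
  · rintro ⟨s, rfl⟩
    -- choose the integer shift
    have hk : ∃ k : ℤ, s + k ∈ Set.uIcc (m : ℝ) (n : ℝ) := by
      refine ⟨min m n - ⌊s⌋, ?_⟩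
      have f1 := Int.floor_le s
      have f2 := Int.lt_floor_add_one s
      rcases lt_or_gt_of_ne hmn with h | h
      · have h' : (m : ℝ) + 1 ≤ n := by exact_mod_cast h
        rw [min_eq_left h.le]
        refine Set.mem_uIcc.2 (Or.inl ?_)
        push_cast
        constructor <;> linarith
      · have h' : (n : ℝ) + 1 ≤ m := by exact_mod_cast h
        rw [min_eq_right h.le]
        refine Set.mem_uIcc.2 (Or.inr ?_)
        push_cast
        constructor <;> linarith
    obtain ⟨k, hk⟩ := hk
    obtain ⟨r, hr, hrk⟩ := hivt hk
    have h1 := hshift (-k) _ ⟨r, hseg r hr, rfl⟩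
    rw [hpt r (hseg r hr), hrk] at h1
    convert h1 using 1
    push_cast; module

/-- Let `C ⊆ ℝ³` be an infinite rational space curve that is not a line,
invariant under two rotations `f₁`, `f₂` of `ℝ³` with axes `L₁`, `L₂`. If `L₁` and `L₂` are
parallel (have the same direction), then `L₁ = L₂`. -/
theorem statement_4 (X : RatParam 3) (C : Set (EuclideanSpace ℝ (Fin 3)))
    (hC : C = X.curve) (hCinf : C.Infinite) (hline : ¬ IsLine C)
    (f₁ f₂ : EuclideanSpace ℝ (Fin 3) → EuclideanSpace ℝ (Fin 3))
    (h₁ : IsRotation f₁) (h₂ : IsRotation f₂)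
    (L₁ L₂ : Set (EuclideanSpace ℝ (Fin 3)))
    (hL₁ : L₁ = {x | f₁ x = x}) (hL₂ : L₂ = {x | f₂ x = x})
    (hinv₁ : f₁ '' C = C) (hinv₂ : f₂ '' C = C)
    (hpar : ∃ (p₁ p₂ v : EuclideanSpace ℝ (Fin 3)), v ≠ 0 ∧
      L₁ = {x | ∃ s : ℝ, x = p₁ + s • v} ∧ L₂ = {x | ∃ s : ℝ, x = p₂ + s • v}) :
    L₁ = L₂ := by
  obtain ⟨p₁, p₂, v, hv, hl₁, hl₂⟩ := hpar
  obtain ⟨⟨Q, a, hQ, hQd, hf₁⟩, -, -⟩ := h₁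
  obtain ⟨⟨R, b, hR, hRd, hf₂⟩, -, -⟩ := h₂
  have hf₁' : ∀ x, (f₁ x).ofLp = Q *ᵥ x.ofLp + a.ofLp := fun x => funext fun i => hf₁ x i
  have hf₂' : ∀ x, (f₂ x).ofLp = R *ᵥ x.ofLp + b.ofLp := fun x => funext fun i => hf₂ x i
  have fix₁ : ∀ s : ℝ, f₁ (p₁ + s • v) = p₁ + s • v := fun s => by
    have : p₁ + s • v ∈ L₁ := hl₁ ▸ ⟨s, rfl⟩
    rwa [hL₁] at this
  have fix₂ : ∀ s : ℝ, f₂ (p₂ + s • v) = p₂ + s • v := fun s => by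
    have : p₂ + s • v ∈ L₂ := hl₂ ▸ ⟨s, rfl⟩
    rwa [hL₂] at this
  have e₁ : Q *ᵥ p₁.ofLp + a.ofLp = p₁.ofLp := by
    have := congrArg WithLp.ofLp (fix₁ 0)
    rw [hf₁'] at this
    simpa using this
  have e₂ : R *ᵥ p₂.ofLp + b.ofLp = p₂.ofLp := by
    have := congrArg WithLp.ofLp (fix₂ 0)
    rw [hf₂'] at this
    simpa using this
  have hQv : Q *ᵥ v.ofLp = v.ofLp := by
    have := congrArg WithLp.ofLp (fix₁ 1)
    rw [hf₁'] at this
    simp only [one_smul, WithLp.ofLp_add, Matrix.mulVec_add] at this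
    have h3 := congrArg₂ (· - ·) this e₁
    simp only at h3
    convert h3 using 1 <;> abel
  have hRv : R *ᵥ v.ofLp = v.ofLp := by
    have := congrArg WithLp.ofLp (fix₂ 1)
    rw [hf₂'] at this
    simp only [one_smul, WithLp.ofLp_add, Matrix.mulVec_add] at this
    have h3 := congrArg₂ (· - ·) this e₂
    simp only at h3
    convert h3 using 1 <;> abel
  have hv' : v.ofLp ≠ 0 := fun h => hv (by ext i; simpa using congrFun h i)
  have hcomm := comm_all Q R hQ hQd hR hRd v.ofLp hv' hQv hRv
  set w := f₁ (f₂ 0) - f₂ (f₁ 0) with hw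
  have htr : ∀ x, f₁ (f₂ x) = f₂ (f₁ x) + w := by
    intro x
    apply WithLp.ofLp_injective 2
    simp only [hw, WithLp.ofLp_add, WithLp.ofLp_sub, hf₁', hf₂', Matrix.mulVec_add, hcomm,
      WithLp.ofLp_zero, Matrix.mulVec_zero]
    abel
  by_cases hw0 : w = 0
  · have h1 : f₁ p₂ ∈ L₂ := by
      rw [hL₂]
      have h := htr p₂
      have h' := fix₂ 0
      rw [zero_smul, add_zero] at h'
      rw [h', hw0, add_zero] at h
      exact h.symm
    rw [hl₂] at h1
    obtain ⟨s, hs⟩ := h1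
    have hd : Q *ᵥ (p₂.ofLp - p₁.ofLp) = (p₂.ofLp - p₁.ofLp) + s • v.ofLp := by
      have h2 := congrArg WithLp.ofLp hs
      rw [hf₁'] at h2
      simp only [WithLp.ofLp_add, WithLp.ofLp_smul] at h2
      have h3 := congrArg₂ (· - ·) h2 e₁
      simp only at h3
      rw [Matrix.mulVec_sub]
      convert h3 using 1 <;> abel
    have h4 := dot_Q Q hQ (p₂.ofLp - p₁.ofLp) v.ofLp
    rw [hd, hQv, add_dotProduct, smul_dotProduct, smul_eq_mul] at h4
    have hvv : v.ofLp ⬝ᵥ v.ofLp ≠ 0 := fun h => hv' (dotProduct_self_eq_zero.1 h)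
    have hs0 : s = 0 := by
      have : s * (v.ofLp ⬝ᵥ v.ofLp) = 0 := by linarith
      exact (mul_eq_zero.1 this).resolve_right hvv
    have h5 : p₂ ∈ L₁ := by
      rw [hL₁]
      show f₁ p₂ = p₂
      rw [hs, hs0]; simp
    rw [hl₁] at h5
    obtain ⟨r, hr⟩ := h5
    rw [hl₁, hl₂, hr]
    ext y
    constructor
    · rintro ⟨z, rfl⟩
      exact ⟨z - r, by module⟩
    · rintro ⟨z, rfl⟩
      exact ⟨r + z, by module⟩
  · exfalso
    apply hline
    have m₁ : ∀ x ∈ C, f₁ x ∈ C := fun x hx => hinv₁ ▸ Set.mem_image_of_mem f₁ hx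
    have m₂ : ∀ x ∈ C, f₂ x ∈ C := fun x hx => hinv₂ ▸ Set.mem_image_of_mem f₂ hx
    have s₁ : ∀ y ∈ C, ∃ x ∈ C, f₁ x = y := fun y hy => by
      rw [← hinv₁] at hy; exact hy
    have s₂ : ∀ y ∈ C, ∃ x ∈ C, f₂ x = y := fun y hy => by
      rw [← hinv₂] at hy; exact hy
    have hp : ∀ y ∈ C, y + w ∈ C := by
      intro y hy
      obtain ⟨z, hz, rfl⟩ := s₂ y hy
      obtain ⟨x, hx, rfl⟩ := s₁ z hz
      rw [← htr]
      exact m₁ _ (m₂ _ hx)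
    have hm : ∀ y ∈ C, y - w ∈ C := by
      intro y hy
      obtain ⟨z, hz, rfl⟩ := s₁ y hy
      obtain ⟨x, hx, rfl⟩ := s₂ z hz
      rw [htr, add_sub_cancel_right]
      exact m₂ _ (m₁ _ hx)
    subst hC
    exact line_of_transl X hCinf.nonempty w hw0 hp hm
end
end

section
/- Let C ⊆ ℝ³ be an infinite rational space curve that is not a line. If the central inversions with centers P₁ and P₂ (the maps x ↦ 2P₁ − x and x ↦ 2P₂ − x) both map C onto itself, then P₁ = P₂. In other words, C is invariant under at most one central inversion. -/
open Polynomial Matrix RealInnerProductSpace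

noncomputable section

/-- Let `C ⊆ ℝ³` be an infinite rational space curve that is not a line. If the
central inversions with centers `P₁` and `P₂` (the maps `x ↦ 2P₁ − x` and `x ↦ 2P₂ − x`) both
map `C` onto itself, then `P₁ = P₂`. -/
theorem statement_5 (X : RatParam 3) (C : Set (EuclideanSpace ℝ (Fin 3)))
    (hC : C = X.curve) (hCinf : C.Infinite) (hline : ¬ IsLine C)
    (P₁ P₂ : EuclideanSpace ℝ (Fin 3))
    (h₁ : (fun x => (2 : ℝ) • P₁ - x) '' C = C)
    (h₂ : (fun x => (2 : ℝ) • P₂ - x) '' C = C) :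
    P₁ = P₂ := by
  by_contra hne
  set v : EuclideanSpace ℝ (Fin 3) := (2 : ℝ) • P₂ - (2 : ℝ) • P₁ with hv
  have hv0 : v ≠ 0 := by
    intro h
    apply hne
    rw [hv, ← smul_sub] at h
    have := (smul_eq_zero.mp h).resolve_left two_ne_zero
    exact (sub_eq_zero.mp this).symm
  have hadd : ∀ x ∈ C, x + v ∈ C := by
    intro x hx
    have e1 : (2 : ℝ) • P₁ - x ∈ C := by rw [← h₁]; exact ⟨x, hx, rfl⟩
    have e2 : (2 : ℝ) • P₂ - ((2 : ℝ) • P₁ - x) ∈ C := by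
      nth_rewrite 1 [← h₂]; exact ⟨_, e1, rfl⟩
    convert e2 using 1
    rw [hv]; abel
  have hsub : ∀ x ∈ C, x - v ∈ C := by
    intro x hx
    have e1 : (2 : ℝ) • P₂ - x ∈ C := by rw [← h₂]; exact ⟨x, hx, rfl⟩
    have e2 : (2 : ℝ) • P₁ - ((2 : ℝ) • P₂ - x) ∈ C := by
      nth_rewrite 1 [← h₁]; exact ⟨_, e1, rfl⟩
    convert e2 using 1
    rw [hv]; abel
  have hint : ∀ (k : ℤ), ∀ x ∈ C, x + (k : ℝ) • v ∈ C := by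
    intro k x hx
    induction k using Int.induction_on with
    | zero => simpa using hx
    | succ n ih =>
      convert hadd _ ih using 1
      push_cast; rw [add_smul, one_smul]; abel
    | pred n ih =>
      convert hsub _ ih using 1
      push_cast; rw [sub_smul, one_smul]; abel
  obtain ⟨x0, hx0⟩ := hCinf.nonempty
  obtain ⟨j, hj⟩ : ∃ j, v j ≠ 0 := by
    by_contra! h
    exact hv0 (by ext i; simpa using h i)
  have hex : ∀ k : ℤ, ∃ t ∈ X.domain, X.eval t = x0 + (k : ℝ) • v := by
    intro k
    have := hint k x0 hx0
    rw [hC] at this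
    exact this
  choose T hTd hT using hex
  have hTinj : Function.Injective T := by
    intro a b hab
    have h := hT a
    rw [hab, hT b] at h
    have h2 := congrArg (fun x : EuclideanSpace ℝ (Fin 3) => x j) h
    simp only [PiLp.add_apply, PiLp.smul_apply, smul_eq_mul, add_right_inj] at h2
    exact (Int.cast_injective (α := ℝ) (mul_right_cancel₀ hj h2)).symm
  have hTinf : (Set.range T).Infinite := Set.infinite_range_of_injective hTinj
  -- the curve lies in the line through `x0` with direction `v`
  have hlin : ∀ x ∈ C, ∀ i, v j * (x i - x0 i) = v i * (x j - x0 j) := by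
    intro x hx i
    set c : ℝ := v j * x0 i - v i * x0 j with hc
    set F : Polynomial ℝ := Polynomial.C (v j) * (X.p i * X.q j)
      - Polynomial.C (v i) * (X.p j * X.q i) - Polynomial.C c * (X.q i * X.q j) with hF
    have key : ∀ t ∈ X.domain, F.eval t = (X.q i).eval t * (X.q j).eval t *
        (v j * X.eval t i - v i * X.eval t j - c) := by
      intro t ht
      have q1 := ht i
      have q2 := ht j
      simp only [hF, RatParam.eval, Polynomial.eval_sub, Polynomial.eval_mul, Polynomial.eval_C]
      field_simp
    have hF0 : F = 0 := by
      apply Polynomial.eq_zero_of_infinite_isRoot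
      apply hTinf.mono
      rintro _ ⟨k, rfl⟩
      show F.eval (T k) = 0
      rw [key _ (hTd k), hT k]
      simp only [PiLp.add_apply, PiLp.smul_apply, smul_eq_mul, hc]
      ring
    rw [hC] at hx
    obtain ⟨t, ht, rfl⟩ := hx
    have h := key t ht
    rw [hF0, Polynomial.eval_zero] at h
    have h3 := (mul_eq_zero.mp h.symm).resolve_left (mul_ne_zero (ht i) (ht j))
    rw [hc] at h3
    linarith
  have hpt : ∀ x ∈ C, x = x0 + ((x j - x0 j) / v j) • v := by
    intro x hx
    ext i
    have := hlin x hx i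
    simp only [PiLp.add_apply, PiLp.smul_apply, smul_eq_mul]
    field_simp
    linarith
  apply hline
  refine ⟨x0, v, hv0, ?_⟩
  ext y
  constructor
  · intro hy
    exact ⟨_, hpt y hy⟩
  rintro ⟨s, rfl⟩
  -- pigeonhole on the components of the domain
  set G : Finset ℝ := Finset.univ.biUnion fun i => (X.q i).roots.toFinset with hG
  have hGd : ∀ t, t ∉ G → t ∈ X.domain := by
    intro t ht i hi
    apply ht
    rw [hG, Finset.mem_biUnion]
    exact ⟨i, Finset.mem_univ _, by
      rw [Multiset.mem_toFinset, Polynomial.mem_roots (X.q_ne_zero i)]; exact hi⟩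
  have hdG : ∀ t ∈ X.domain, t ∉ G := by
    intro t ht h
    rw [hG, Finset.mem_biUnion] at h
    obtain ⟨i, -, hi⟩ := h
    rw [Multiset.mem_toFinset, Polynomial.mem_roots (X.q_ne_zero i)] at hi
    exact ht i hi
  obtain ⟨a, b, hab, heq⟩ : ∃ a b : ℤ, a < b ∧
      (fun g : G => decide (g.1 < T a)) = (fun g : G => decide (g.1 < T b)) := by
    obtain ⟨a, b, hab, h⟩ := Finite.exists_ne_map_eq_of_infinite
      (fun k : ℤ => (fun g : G => decide (g.1 < T k)))
    rcases lt_or_gt_of_ne hab with h' | h'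
    · exact ⟨a, b, h', h⟩
    · exact ⟨b, a, h', h.symm⟩
  have hI : Set.uIcc (T a) (T b) ⊆ X.domain := by
    intro t ht
    apply hGd
    intro htG
    have h := congrFun heq ⟨t, htG⟩
    simp only [decide_eq_decide] at h
    have ha : t ≠ T a := fun e => hdG _ (hTd a) (e ▸ htG)
    have hb : t ≠ T b := fun e => hdG _ (hTd b) (e ▸ htG)
    rcases Set.mem_uIcc.mp ht with ⟨h1, h2⟩ | ⟨h1, h2⟩
    · exact absurd (h.mpr (lt_of_le_of_ne h2 hb)) (not_lt.mpr h1)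
    · exact absurd (h.mp (lt_of_le_of_ne h2 ha)) (not_lt.mpr h1)
  have hcont : ContinuousOn (fun t => X.eval t j) (Set.uIcc (T a) (T b)) := by
    have : ContinuousOn (fun t => (X.p j).eval t / (X.q j).eval t) (Set.uIcc (T a) (T b)) :=
      (X.p j).continuous.continuousOn.div (X.q j).continuous.continuousOn
        (fun t ht => hI ht j)
    exact this
  have hmem : x0 j + (Int.fract s + a) * v j ∈ Set.uIcc (X.eval (T a) j) (X.eval (T b) j) := by
    rw [hT a, hT b]
    simp only [PiLp.add_apply, PiLp.smul_apply, smul_eq_mul]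
    have f0 := Int.fract_nonneg s
    have f1 := Int.fract_lt_one s
    have hab' : (a : ℝ) + 1 ≤ b := by exact_mod_cast hab
    rw [Set.mem_uIcc]
    rcases lt_or_gt_of_ne hj with h | h
    · right; constructor <;> nlinarith
    · left; constructor <;> nlinarith
  obtain ⟨t, ht, hft⟩ := intermediate_value_uIcc hcont hmem
  have htC : X.eval t ∈ C := by rw [hC]; exact ⟨t, hI ht, rfl⟩
  have hfin := hint (⌊s⌋ - a) _ htC
  convert hfin using 1
  rw [hpt _ htC]
  simp only at hft
  rw [hft, add_sub_cancel_left, mul_div_cancel_right₀ _ hj, add_assoc, ← add_smul]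
  congr 2
  push_cast
  rw [Int.fract]
  ring
end
end

section
/- Let n = 2 or n = 3, and let C ⊆ ℝⁿ be an infinite rational curve that is not a line. Then every isometry f of ℝⁿ with f(C) = C has a fixed point. (Equivalently: an algebraic rational curve other than a line cannot be invariant under a nontrivial translation or glide reflection, nor, in space, under a twist.) -/
open Polynomial Matrix RealInnerProductSpace

noncomputable section

/-- Cluster values of a rational function at infinity. -/
lemma clusterTop (P Q : ℝ[X]) (hQ : Q ≠ 0) (γ : ℝ) (t : ℕ → ℝ)
    (ht : Filter.Tendsto t Filter.atTop Filter.atTop)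
    (hg : Filter.Tendsto (fun m => P.eval (t m) / Q.eval (t m)) Filter.atTop (nhds γ)) :
    γ = 0 ∨ γ = P.leadingCoeff / Q.leadingCoeff := by
  rcases lt_trichotomy P.degree Q.degree with h | h | h
  · left
    exact tendsto_nhds_unique hg ((Polynomial.div_tendsto_atTop_zero_of_degree_lt P Q h).comp ht)
  · right
    exact tendsto_nhds_unique hg
      ((Polynomial.div_tendsto_atTop_leadingCoeff_div_of_degree_eq P Q h).comp ht)
  · exfalso
    have h1 := (Polynomial.abs_div_tendsto_atTop_atTop_of_degree_gt P Q h hQ).comp ht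
    exact not_tendsto_nhds_of_tendsto_atTop h1 _ hg.abs

/-- The possible cluster values of a rational function along sequences where another one blows up
form a finite set. -/
lemma finite_cluster (P Q N D : ℝ[X]) (hPQ : IsCoprime P Q) (hQ : Q ≠ 0) (hD : D ≠ 0) :
    ∃ S : Set ℝ, S.Finite ∧ ∀ (γ : ℝ) (t : ℕ → ℝ), (∀ m, Q.eval (t m) ≠ 0) →
      Filter.Tendsto (fun m => P.eval (t m) / Q.eval (t m)) Filter.atTop (nhds γ) →
      Filter.Tendsto (fun m => N.eval (t m) / D.eval (t m)) Filter.atTop Filter.atTop →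
      γ ∈ S := by
  classical
  let P' := P.comp (-X)
  let Q' := Q.comp (-X)
  refine ⟨((fun a => P.eval a / Q.eval a) '' {a | D.IsRoot a}) ∪
    {0, P.leadingCoeff / Q.leadingCoeff, P'.leadingCoeff / Q'.leadingCoeff}, ?_, ?_⟩
  · refine Set.Finite.union ((Polynomial.finite_setOfPred_isRoot hD).image _) (Set.toFinite _)
  intro γ t hQt hg hh
  have hQ' : Q' ≠ 0 := by
    intro h
    apply hQ
    have : Q'.comp (-X) = 0 := by rw [h]; simp
    simpa [Q', Polynomial.comp_assoc] using this
  by_cases hT : ∃ φ : ℕ → ℕ, StrictMono φ ∧ Filter.Tendsto (t ∘ φ) Filter.atTop Filter.atTop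
  · obtain ⟨φ, hφ, h⟩ := hT
    have := clusterTop P Q hQ γ _ h (hg.comp hφ.tendsto_atTop)
    right; simp; tauto
  by_cases hB : ∃ φ : ℕ → ℕ, StrictMono φ ∧ Filter.Tendsto (fun m => - t (φ m)) Filter.atTop Filter.atTop
  · obtain ⟨φ, hφ, h⟩ := hB
    have := clusterTop P' Q' hQ' γ _ h (by simpa [P', Q', Function.comp_def] using (hg.comp hφ.tendsto_atTop))
    right; simp; tauto
  have key : ∃ R : ℝ, ∃ᶠ m in Filter.atTop, t m ∈ Set.Icc (-R) R := by
    have hT' : ¬ Filter.Tendsto (fun m => |t m|) Filter.atTop Filter.atTop := by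
      intro habs
      have hfr : (∃ᶠ m in Filter.atTop, 0 ≤ t m) ∨ (∃ᶠ m in Filter.atTop, t m ≤ 0) := by
        rw [← Filter.frequently_or_distrib]
        exact (Filter.Eventually.of_forall fun m => le_total 0 (t m)).frequently
      rcases hfr with h | h
      · obtain ⟨φ, hφ, h⟩ := Filter.extraction_of_frequently_atTop h
        exact hT ⟨φ, hφ, (habs.comp hφ.tendsto_atTop).congr fun m => abs_of_nonneg (h m)⟩
      · obtain ⟨φ, hφ, h⟩ := Filter.extraction_of_frequently_atTop h
        exact hB ⟨φ, hφ, (habs.comp hφ.tendsto_atTop).congr fun m => abs_of_nonpos (h m)⟩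
    rw [Filter.tendsto_atTop] at hT'
    push Not at hT'
    obtain ⟨R, hR⟩ := hT'
    refine ⟨R, hR.mono fun m hm => ?_⟩
    exact abs_le.1 hm.le
  obtain ⟨R, hR⟩ := key
  obtain ⟨a, -, φ, hφ, ha⟩ := isCompact_Icc.tendsto_subseq' hR
  left
  have hPa : Filter.Tendsto (fun m => P.eval (t (φ m))) Filter.atTop (nhds (P.eval a)) :=
    (P.continuous.tendsto a).comp ha
  have hQa : Filter.Tendsto (fun m => Q.eval (t (φ m))) Filter.atTop (nhds (Q.eval a)) :=
    (Q.continuous.tendsto a).comp ha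
  have hgφ : Filter.Tendsto (fun m => P.eval (t (φ m)) / Q.eval (t (φ m))) Filter.atTop (nhds γ) :=
    hg.comp hφ.tendsto_atTop
  have e : P.eval a = γ * Q.eval a := by
    refine tendsto_nhds_unique hPa ((hgφ.mul hQa).congr fun m => ?_)
    exact div_mul_cancel₀ _ (hQt _)
  have hQa0 : Q.eval a ≠ 0 := by
    intro h0
    obtain ⟨u, w, huw⟩ := hPQ
    have := congrArg (Polynomial.eval a) huw
    simp [e, h0] at this
  refine ⟨a, ?_, ?_⟩
  · by_contra hDa
    have hDa : D.eval a ≠ 0 := hDa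
    have h1 : Filter.Tendsto (fun m => N.eval (t (φ m)) / D.eval (t (φ m))) Filter.atTop
        (nhds (N.eval a / D.eval a)) :=
      ((N.continuous.tendsto a).comp ha).div ((D.continuous.tendsto a).comp ha) hDa
    exact not_tendsto_nhds_of_tendsto_atTop (hh.comp hφ.tendsto_atTop) _ h1
  · simp only
    rw [e]; field_simp

/-- Same without coprimality. -/
lemma finite_cluster' (P N D : ℝ[X]) (hD : D ≠ 0) :
    ∃ S : Set ℝ, S.Finite ∧ ∀ (γ : ℝ) (t : ℕ → ℝ), (∀ m, D.eval (t m) ≠ 0) →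
      Filter.Tendsto (fun m => P.eval (t m) / D.eval (t m)) Filter.atTop (nhds γ) →
      Filter.Tendsto (fun m => N.eval (t m) / D.eval (t m)) Filter.atTop Filter.atTop →
      γ ∈ S := by
  classical
  have hcop := isCoprime_div_gcd_div_gcd (p := P) hD
  set G := GCDMonoid.gcd P D with hG
  have hP : G * (P / G) = P :=
    EuclideanDomain.mul_div_cancel' (gcd_ne_zero_of_right hD) (gcd_dvd_left P D)
  have hD' : G * (D / G) = D :=
    EuclideanDomain.mul_div_cancel' (gcd_ne_zero_of_right hD) (gcd_dvd_right P D)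
  have hne : D / G ≠ 0 := fun h => hD (by rw [← hD', h, mul_zero])
  obtain ⟨S, hS, hcl⟩ := finite_cluster (P / G) (D / G) N D hcop hne hD
  refine ⟨S, hS, fun γ t h1 h2 h3 => hcl γ t (fun m h0 => h1 m ?_) (h2.congr fun m => ?_) h3⟩
  · rw [← hD', Polynomial.eval_mul, h0, mul_zero]
  · have h4 := h1 m
    rw [← hD', Polynomial.eval_mul] at h4
    conv_lhs => rw [← hP, ← hD']
    rw [Polynomial.eval_mul, Polynomial.eval_mul, mul_div_mul_left _ _ (left_ne_zero_of_mul h4)]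

/-- An image of a rational function, periodic, is everything. -/
lemma periodic_all (N D : ℝ[X]) (hD : D ≠ 0) (H : Set ℝ)
    (hH : H = (fun t => N.eval t / D.eval t) '' {t | D.eval t ≠ 0})
    (hper : ∀ s, s ∈ H ↔ s + 1 ∈ H) (hne : H.Nonempty) (s : ℝ) : s ∈ H := by
  classical
  by_contra hs
  have hshift : ∀ (j : ℤ) (s : ℝ), s ∈ H ↔ s + j ∈ H := by
    intro j
    induction j using Int.induction_on with
    | zero => simp
    | succ i ih =>
      intro s
      rw [ih s, hper]; push_cast; rw [add_assoc]
    | pred i ih =>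
      intro s
      rw [ih s, hper (s + ((-(i:ℤ) - 1 : ℤ) : ℝ))]; push_cast; ring_nf
  obtain ⟨x, hx⟩ := hne
  have hch : ∀ k : ℕ, ∃ t, D.eval t ≠ 0 ∧ N.eval t / D.eval t = x + k := by
    intro k
    have := (hshift k x).1 hx
    rw [hH] at this
    obtain ⟨t, h1, h2⟩ := this
    exact ⟨t, h1, by simpa using h2⟩
  choose t ht0 ht using hch
  obtain ⟨k, l, hkl, he⟩ := Finite.exists_ne_map_eq_of_infinite
    (fun k => (⟨D.roots.toFinset.filter (· < t k), Finset.mem_powerset.2 (Finset.filter_subset _ _)⟩ :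
      D.roots.toFinset.powerset))
  have he : D.roots.toFinset.filter (· < t k) = D.roots.toFinset.filter (· < t l) := by
    simpa using he
  have hnz : ∀ z ∈ Set.uIcc (t k) (t l), D.eval z ≠ 0 := by
    intro z hz h0
    have hzk : z ≠ t k := fun h => ht0 k (h ▸ h0)
    have hzl : z ≠ t l := fun h => ht0 l (h ▸ h0)
    have hm : z ∈ D.roots.toFinset := by simp [hD, h0]
    have h1 : z < t k ↔ z < t l := by
      have := Finset.ext_iff.1 he z
      simpa only [Finset.mem_filter, hm, true_and] using this
    rcases Set.mem_uIcc.1 hz with ⟨h2, h3⟩ | ⟨h2, h3⟩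
    · exact absurd (h1.2 (lt_of_le_of_ne h3 hzl)) (not_lt.2 h2)
    · exact absurd (h1.1 (lt_of_le_of_ne h3 hzk)) (not_lt.2 h2)
  have hcont : ContinuousOn (fun t => N.eval t / D.eval t) (Set.uIcc (t k) (t l)) :=
    N.continuous.continuousOn.div D.continuous.continuousOn hnz
  have hiv := intermediate_value_uIcc hcont
  simp only [ht] at hiv
  have hex : ∃ j : ℤ, s + j ∈ Set.uIcc (x + k) (x + l) := by
    have c1 := Int.le_ceil (x - s)
    have c2 := Int.ceil_lt_add_one (x - s)
    rcases lt_or_gt_of_ne hkl with h | h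
    · refine ⟨k + ⌈x - s⌉, Set.mem_uIcc.2 (Or.inl ?_)⟩
      have : (k : ℝ) + 1 ≤ l := by exact_mod_cast h
      push_cast
      constructor <;> linarith
    · refine ⟨l + ⌈x - s⌉, Set.mem_uIcc.2 (Or.inr ?_)⟩
      have : (l : ℝ) + 1 ≤ k := by exact_mod_cast h
      push_cast
      constructor <;> linarith
  obtain ⟨j, hj⟩ := hex
  obtain ⟨z, hz, hzj⟩ := hiv hj
  apply hs
  rw [hshift j, hH]
  exact ⟨z, hnz z hz, hzj⟩

/-- Structure of fixed point free affine isometries. -/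
lemma fpf_structure {E : Type*} [NormedAddCommGroup E] [InnerProductSpace ℝ E]
    [FiniteDimensional ℝ E] (A : E ≃ₗᵢ[ℝ] E) (b : E) (h : ∀ x, A x + b ≠ x) :
    ∃ o v : E, v ≠ 0 ∧ A v = v ∧ ∀ z, A (o + z) + b = o + A z + v := by
  let T : E →ₗ[ℝ] E := A.toLinearEquiv.toLinearMap - LinearMap.id
  have hT : ∀ x, T x = A x - x := fun x => rfl
  obtain ⟨y, ⟨w, hw⟩, v, hv, hb⟩ := (LinearMap.range T).exists_add_mem_mem_orthogonal b
  rw [hT] at hw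
  have hv' : ∀ x, ⟪A x - x, v⟫ = 0 := fun x => by
    have := (Submodule.mem_orthogonal _ _).1 hv (T x) ⟨x, rfl⟩
    rwa [hT] at this
  have hAv : A v = v := by
    have h1 := hv' v
    rw [inner_sub_left, sub_eq_zero] at h1
    have h2 : ‖A v - v‖ ^ 2 = 0 := by
      rw [norm_sub_sq_real, h1, A.norm_map, real_inner_self_eq_norm_sq]; ring
    exact sub_eq_zero.1 (norm_eq_zero.1 (pow_eq_zero_iff two_ne_zero |>.1 h2))
  refine ⟨-w, v, ?_, hAv, ?_⟩
  · rintro rfl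
    apply h (-w)
    rw [hb, ← hw, map_neg]; abel
  · intro z
    rw [hb, ← hw, map_add, map_neg]; abel

/-- Recurrence for linear isometries. -/
lemma recurrence {E : Type*} [NormedAddCommGroup E] [InnerProductSpace ℝ E]
    [FiniteDimensional ℝ E] (A : E ≃ₗᵢ[ℝ] E) (y : E) :
    ∃ m : ℕ → ℕ, Filter.Tendsto m Filter.atTop Filter.atTop ∧
      Filter.Tendsto (fun j => A^[m j] y) Filter.atTop (nhds y) := by
  have hn : ∀ (k : ℕ) (z : E), ‖A^[k] z‖ = ‖z‖ := by
    intro k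
    induction k with
    | zero => simp
    | succ k ih => intro z; rw [Function.iterate_succ_apply, ih, A.norm_map]
  have hs : ∀ (k : ℕ) (z w : E), A^[k] (z - w) = A^[k] z - A^[k] w := by
    intro k
    induction k with
    | zero => simp
    | succ k ih => intro z w; simp only [Function.iterate_succ_apply, map_sub, ih]
  obtain ⟨l, -, φ, hφ, hl⟩ := (isCompact_closedBall (0:E) ‖y‖).tendsto_subseq
    (x := fun k => A^[k] y) (fun k => by simp [hn])
  have hge : ∀ j, j + φ j ≤ φ (j + j) := fun j => hφ.add_le_nat j j
  refine ⟨fun j => φ (j + j) - φ j, ?_, ?_⟩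
  · exact Filter.tendsto_atTop_mono (fun j => by have := hge j; simp only [id]; omega) Filter.tendsto_id
  · have h2 : Filter.Tendsto (fun j : ℕ => j + j) Filter.atTop Filter.atTop :=
      Filter.tendsto_atTop_mono (fun j => by simp only [id]; omega) Filter.tendsto_id
    have h3 := (hl.comp h2).sub hl
    rw [sub_self] at h3
    rw [tendsto_iff_norm_sub_tendsto_zero]
    have h4 := h3.norm
    rw [norm_zero] at h4
    refine h4.congr fun j => ?_
    have : A^[φ (j + j)] y = A^[φ j] (A^[φ (j + j) - φ j] y) := by
      rw [← Function.iterate_add_apply]; congr 2; have := hge j; omega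
    simp only [Function.comp]
    rw [this, ← hs, hn]

/-- Affine functionals along the curve are rational with common denominator. -/
lemma rat_functional {n : ℕ} (X : RatParam n) (c : Fin n → ℝ) (d : ℝ) :
    ∃ N : ℝ[X], ∀ t ∈ X.domain, (∑ i, c i * X.eval t i) + d = N.eval t / (∏ i, X.q i).eval t := by
  classical
  refine ⟨(∑ i, C (c i) * (X.p i * ∏ j ∈ Finset.univ.erase i, X.q j)) + C d * ∏ i, X.q i, ?_⟩
  intro t ht
  have hne : (∏ i, X.q i).eval t ≠ 0 := by
    rw [Polynomial.eval_prod]; exact Finset.prod_ne_zero_iff.2 fun i _ => ht i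
  rw [eq_div_iff hne, Polynomial.eval_add, add_mul, Polynomial.eval_finsetSum, Finset.sum_mul]
  congr 1
  · refine Finset.sum_congr rfl fun i _ => ?_
    rw [← Finset.mul_prod_erase Finset.univ X.q (Finset.mem_univ i)]
    simp only [Polynomial.eval_mul, Polynomial.eval_C, RatParam.eval]
    have := ht i
    field_simp
  · simp

/-- Let `n = 2` or `n = 3`, and let `C ⊆ ℝⁿ` be an infinite rational curve
that is not a line. Then every isometry `f` of `ℝⁿ` with `f(C) = C` has a fixed point. -/
theorem statement_10 {n : ℕ} (hn : n = 2 ∨ n = 3) (X : RatParam n)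
    (C : Set (EuclideanSpace ℝ (Fin n))) (hC : C = X.curve) (hCinf : C.Infinite)
    (hline : ¬ IsLine C)
    (f : EuclideanSpace ℝ (Fin n) → EuclideanSpace ℝ (Fin n))
    (hf : Isometry f) (hbij : Function.Bijective f) (hinv : f '' C = C) :
    ∃ p, f p = p := by
  classical
  by_contra hno
  push Not at hno
  let e : EuclideanSpace ℝ (Fin n) ≃ᵢ EuclideanSpace ℝ (Fin n) :=
    ⟨Equiv.ofBijective f hbij, hf⟩
  let A := e.toRealLinearIsometryEquiv
  have hA : ∀ x, f x = A x + f 0 := by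
    intro x
    have : A x = f x - f 0 := e.toRealLinearIsometryEquiv_apply x
    rw [this]; abel
  obtain ⟨o, v, hv, hAv, hfo⟩ := fpf_structure A (f 0) (fun x => by rw [← hA]; exact hno x)
  have hfo : ∀ z, f (o + z) = o + A z + v := fun z => by rw [hA, hfo]
  have hvv : ⟪v, v⟫ ≠ 0 := by simpa using hv
  let h : EuclideanSpace ℝ (Fin n) → ℝ := fun x => ⟪x - o, v⟫ / ⟪v, v⟫
  let y : EuclideanSpace ℝ (Fin n) → EuclideanSpace ℝ (Fin n) := fun x => (x - o) - h x • v
  have hsub : ∀ x, f x - o = A (x - o) + v := by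
    intro x
    have := hfo (x - o)
    rw [add_sub_cancel] at this
    rw [this]; abel
  have hh : ∀ x, h (f x) = h x + 1 := by
    intro x
    have h1 : ⟪A (x - o), v⟫ = ⟪x - o, v⟫ := by
      conv_lhs => rw [← hAv]
      exact A.inner_map_map _ _
    simp only [h]
    rw [hsub, inner_add_left, h1]
    field_simp
  have hy : ∀ x, y (f x) = A (y x) := by
    intro x
    simp only [y]
    rw [hh, hsub, map_sub A (x - o), map_smul, hAv, add_smul, one_smul]
    abel
  have hhk : ∀ (k : ℕ) x, h (f^[k] x) = h x + k := by
    intro k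
    induction k with
    | zero => simp
    | succ k ih => intro x; rw [Function.iterate_succ_apply, ih, hh]; push_cast; ring
  have hyk : ∀ (k : ℕ) x, y (f^[k] x) = A^[k] (y x) := by
    intro k
    induction k with
    | zero => simp
    | succ k ih => intro x; rw [Function.iterate_succ_apply, ih, hy, Function.iterate_succ_apply]
  have hCk : ∀ (k : ℕ), ∀ x ∈ C, f^[k] x ∈ C := by
    intro k
    induction k with
    | zero => simp
    | succ k ih =>
      intro x hx
      rw [Function.iterate_succ_apply]
      exact ih _ (hinv ▸ Set.mem_image_of_mem f hx)
  let D : ℝ[X] := ∏ i, X.q i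
  have hD : D ≠ 0 := Finset.prod_ne_zero_iff.2 fun i _ => X.q_ne_zero i
  have hdom : ∀ t, D.eval t ≠ 0 ↔ t ∈ X.domain := by
    intro t
    simp only [D, Polynomial.eval_prod, Finset.prod_ne_zero_iff, RatParam.domain, Set.mem_ofPred_eq,
      Finset.mem_univ, true_imp_iff]
  have hhc : ∀ x, h x = (∑ i, (v i / ⟪v, v⟫) * x i) + (- ⟪o, v⟫ / ⟪v, v⟫) := by
    intro x
    have h1 : ∑ i, (v i / ⟪v, v⟫) * x i = ⟪x, v⟫ / ⟪v, v⟫ := by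
      rw [PiLp.inner_apply (𝕜 := ℝ) x v, Finset.sum_div]
      refine Finset.sum_congr rfl fun i _ => ?_
      simp; ring
    rw [h1]
    simp only [h, inner_sub_left]; ring
  obtain ⟨N, hN⟩ := rat_functional X (fun i => v i / ⟪v, v⟫) (- ⟪o, v⟫ / ⟪v, v⟫)
  have hN : ∀ t ∈ X.domain, h (X.eval t) = N.eval t / D.eval t := fun t ht => by
    rw [hhc]; exact hN t ht
  have hyr : ∀ i, ∃ P : ℝ[X], ∀ t ∈ X.domain, y (X.eval t) i = P.eval t / D.eval t := by
    intro i
    obtain ⟨P, hP⟩ := rat_functional X (fun j => if j = i then 1 else 0) (- o i)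
    refine ⟨P - Polynomial.C (v i) * N, fun t ht => ?_⟩
    have h1 := hP t ht
    simp only [ite_mul, one_mul, zero_mul, Finset.sum_ite_eq', Finset.mem_univ, if_true] at h1
    have h2 : y (X.eval t) i = X.eval t i + -o i - h (X.eval t) * v i := by
      simp [y]; ring
    rw [h2, h1, hN t ht]
    simp only [Polynomial.eval_sub, Polynomial.eval_mul, Polynomial.eval_C]
    change _ / D.eval t - _ = _
    ring
  choose P hP using hyr
  have hCt : ∀ x ∈ C, ∃ t ∈ X.domain, X.eval t = x := by
    intro x hx; rw [hC] at hx; exact hx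
  have htC : ∀ t ∈ X.domain, X.eval t ∈ C := by
    intro t ht; rw [hC]; exact ⟨t, ht, rfl⟩
  have hdominf : X.domain.Infinite := by
    intro hfin
    apply hCinf
    rw [hC]
    exact hfin.image _
  have hconst : ∀ i, ∃ γ : ℝ, ∀ t ∈ X.domain, y (X.eval t) i = γ := by
    intro i
    obtain ⟨S, hS, hcl⟩ := finite_cluster' (P i) N D hD
    have hmem : ∀ x ∈ C, y x i ∈ S := by
      intro x hx
      obtain ⟨m, hm, hrec⟩ := recurrence A (y x)
      choose t ht hte using fun j => hCt _ (hCk (m j) x hx)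
      refine hcl _ t (fun j => (hdom _).2 (ht j)) ?_ ?_
      · have h1 : Filter.Tendsto (fun j => (A^[m j] (y x)) i) Filter.atTop (nhds (y x i)) :=
          ((EuclideanSpace.proj (𝕜 := ℝ) i).continuous.tendsto (y x)).comp hrec
        refine h1.congr fun j => ?_
        rw [← hP i _ (ht j), hte, hyk]
      · have h1 : Filter.Tendsto (fun j => h x + (m j : ℝ)) Filter.atTop Filter.atTop :=
          Filter.tendsto_atTop_add_const_left _ _ (tendsto_natCast_atTop_atTop.comp hm)
        refine h1.congr fun j => ?_
        rw [← hN _ (ht j), hte, hhk]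
    have hex : ∃ γ ∈ S, {t ∈ X.domain | y (X.eval t) i = γ}.Infinite := by
      by_contra hcon
      push Not at hcon
      apply hdominf
      refine (hS.biUnion (t := fun γ => {t ∈ X.domain | y (X.eval t) i = γ})
        fun γ hγ => by simpa using hcon γ hγ).subset ?_
      intro t ht
      simp only [Set.mem_iUnion]
      exact ⟨_, hmem _ (htC t ht), ht, rfl⟩
    obtain ⟨γ, -, hγ⟩ := hex
    have hz : P i - Polynomial.C γ * D = 0 := by
      apply Polynomial.eq_zero_of_infinite_isRoot
      refine hγ.mono ?_
      rintro t ⟨ht, he⟩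
      rw [hP i t ht, div_eq_iff ((hdom t).2 ht)] at he
      simp [he]
    refine ⟨γ, fun t ht => ?_⟩
    rw [hP i t ht, sub_eq_zero.1 hz, Polynomial.eval_mul, Polynomial.eval_C,
      mul_div_cancel_right₀ _ ((hdom t).2 ht)]
  choose γ hγ using hconst
  obtain ⟨x0, hx0⟩ := hCinf.nonempty
  have hyc : ∀ x ∈ C, y x = y x0 := by
    intro x hx
    obtain ⟨t, ht, rfl⟩ := hCt x hx
    obtain ⟨t', ht', rfl⟩ := hCt x0 hx0
    ext i
    rw [hγ i t ht, hγ i t' ht']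
  have hdec : ∀ x, x = o + y x + h x • v := by
    intro x; simp only [y]; abel
  have hall : ∀ s, s ∈ h '' C := by
    refine periodic_all N D hD (h '' C) ?_ ?_ ⟨_, Set.mem_image_of_mem h hx0⟩
    · ext s
      constructor
      · rintro ⟨x, hx, rfl⟩
        obtain ⟨t, ht, rfl⟩ := hCt x hx
        exact ⟨t, (hdom t).2 ht, (hN t ht).symm⟩
      · rintro ⟨t, ht, rfl⟩
        have ht := (hdom t).1 ht
        exact ⟨X.eval t, htC t ht, hN t ht⟩
    · intro s
      constructor
      · rintro ⟨x, hx, rfl⟩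
        exact ⟨f x, hCk 1 x hx, hh x⟩
      · rintro ⟨x, hx, hxs⟩
        rw [← hinv] at hx
        obtain ⟨z, hz, rfl⟩ := hx
        rw [hh] at hxs
        exact ⟨z, hz, by linarith⟩
  apply hline
  refine ⟨o + y x0, v, hv, ?_⟩
  ext x
  constructor
  · intro hx
    refine ⟨h x, ?_⟩
    rw [← hyc x hx]; exact hdec x
  · rintro ⟨s, rfl⟩
    obtain ⟨z, hz, rfl⟩ := hall s
    rw [← hyc z hz, ← hdec]; exact hz
end
end

section
/- Let C ⊆ ℝ³ be an infinite rational space curve that is not a line, and suppose C is invariant under two rotations f₁ and f₂ of ℝ³ with axes L₁ and L₂ respectively. Then L₁ and L₂ are not skew: either L₁ = L₂ or L₁ ∩ L₂ ≠ ∅. -/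
open Polynomial Matrix RealInnerProductSpace

noncomputable section

section Helpers

open Filter Topology

lemma orth_recurrence (Q : Matrix (Fin 3) (Fin 3) ℝ) (hQ : Q ∈ Matrix.orthogonalGroup (Fin 3) ℝ) :
    ∃ U : Ultrafilter ℕ, (U : Filter ℕ) ≤ atTop ∧ Tendsto (fun n : ℕ => Q ^ n) U (𝓝 1) := by
  have hcl : IsClosed ((Matrix.orthogonalGroup (Fin 3) ℝ : Set (Matrix (Fin 3) (Fin 3) ℝ))) := by
    have : ((Matrix.orthogonalGroup (Fin 3) ℝ : Set (Matrix (Fin 3) (Fin 3) ℝ)))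
        = {A | A * star A = 1} := by
      ext A; exact Matrix.mem_orthogonalGroup_iff (Fin 3) ℝ
    rw [this]
    exact isClosed_eq (by fun_prop) continuous_const
  have hK : IsCompact ((Matrix.orthogonalGroup (Fin 3) ℝ : Set (Matrix (Fin 3) (Fin 3) ℝ))) := by
    have h1 : IsCompact (Set.univ.pi fun _ : Fin 3 => Set.univ.pi fun _ : Fin 3 => Set.Icc (-1:ℝ) 1) :=
      isCompact_univ_pi fun _ => isCompact_univ_pi fun _ => isCompact_Icc
    refine h1.of_isClosed_subset hcl ?_
    intro A hA i _ j _
    have := entry_norm_bound_of_unitary (𝕜 := ℝ) hA i j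
    rw [Real.norm_eq_abs, abs_le] at this
    exact this
  have : CompactSpace (Matrix.orthogonalGroup (Fin 3) ℝ) := isCompact_iff_compactSpace.mp hK
  have : IsTopologicalGroup (Matrix.orthogonalGroup (Fin 3) ℝ) := by infer_instance
  have h := mapClusterPt_one_atTop_pow (⟨Q, hQ⟩ : Matrix.orthogonalGroup (Fin 3) ℝ)
  rw [mapClusterPt_iff_ultrafilter] at h
  obtain ⟨U, hU, hT⟩ := h
  refine ⟨U, hU, ?_⟩
  exact (continuous_subtype_val.tendsto _).comp hT

/-- at an end, a rational function has only one possible finite cluster value -/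
lemma end_value (N q : ℝ[X]) (τ : ℝ) : ∃ l : ℝ, ∀ F : Filter ℝ, F.NeBot → F ≤ 𝓝[≠] τ → ∀ c,
    Tendsto (fun t => N.eval t / q.eval t) F (𝓝 c) → c = l := by
  have hm : MeromorphicAt (fun t => N.eval t / q.eval t) τ := by
    have h1 : AnalyticAt ℝ (fun t => N.eval t) τ := by
      simpa using (AnalyticAt.aeval_polynomial (analyticAt_id (𝕜 := ℝ) (z := τ)) N)
    have h2 : AnalyticAt ℝ (fun t => q.eval t) τ := by
      simpa using (AnalyticAt.aeval_polynomial (analyticAt_id (𝕜 := ℝ) (z := τ)) q)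
    exact h1.meromorphicAt.div h2.meromorphicAt
  rcases lt_or_ge (meromorphicOrderAt (fun t => N.eval t / q.eval t) τ) 0 with h | h
  · have h3 := tendsto_cobounded_of_meromorphicOrderAt_neg h
    refine ⟨0, fun F hF hFl c hc => ?_⟩
    exact (hc.not_tendsto (Metric.disjoint_nhds_cobounded c) (h3.mono_left hFl)).elim
  · obtain ⟨l, hl⟩ := tendsto_nhds_of_meromorphicOrderAt_nonneg hm h
    exact ⟨l, fun F hF hFl c hc => tendsto_nhds_unique hc (hl.mono_left hFl)⟩

lemma inf_value (N q : ℝ[X]) : ∃ l : ℝ, ∀ F : Filter ℝ, F.NeBot → F ≤ Bornology.cobounded ℝ → ∀ c,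
    Tendsto (fun t => N.eval t / q.eval t) F (𝓝 c) → c = l := by
  have key : ∀ P : ℝ[X], MeromorphicAt (fun s : ℝ => P.eval s⁻¹) 0 := by
    intro P
    induction P using Polynomial.induction_on' with
    | add p q hp hq => simpa using! hp.add hq
    | monomial n a => 
      simp only [eval_monomial]
      fun_prop
  have hm : MeromorphicAt (fun s : ℝ => N.eval s⁻¹ / q.eval s⁻¹) 0 := (key N).div (key q)
  have hF' : ∀ F : Filter ℝ, F ≤ Bornology.cobounded ℝ → Tendsto Inv.inv F (𝓝[≠] (0:ℝ)) :=
    fun F hF => tendsto_inv₀_cobounded'.mono_left hF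
  rcases lt_or_ge (meromorphicOrderAt (fun s : ℝ => N.eval s⁻¹ / q.eval s⁻¹) 0) 0 with h | h
  · have h3 := tendsto_cobounded_of_meromorphicOrderAt_neg h
    refine ⟨0, fun F hF hFl c hc => ?_⟩
    have := h3.comp (hF' F hFl)
    simp only [Function.comp_def, inv_inv] at this
    exact (hc.not_tendsto (Metric.disjoint_nhds_cobounded c) this).elim
  · obtain ⟨l, hl⟩ := tendsto_nhds_of_meromorphicOrderAt_nonneg hm h
    refine ⟨l, fun F hF hFl c hc => ?_⟩
    have := hl.comp (hF' F hFl)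
    simp only [Function.comp_def, inv_inv] at this
    exact tendsto_nhds_unique hc this

noncomputable def ratEv (P : Fin 3 → ℝ[X]) (q : ℝ[X]) (t : ℝ) : Fin 3 → ℝ := fun i => (P i).eval t / q.eval t

lemma ratEv_dot (P : Fin 3 → ℝ[X]) (q : ℝ[X]) (b : Fin 3 → ℝ) (c t : ℝ) (ht : q.eval t ≠ 0) :
    b ⬝ᵥ ratEv P q t + c = (∑ i, C (b i) * P i + C c * q).eval t / q.eval t := by
  simp only [ratEv, dotProduct, Fin.sum_univ_three, eval_add, eval_mul, eval_C]
  field_simp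

lemma affine_const (P : Fin 3 → ℝ[X]) (q : ℝ[X]) (b : Fin 3 → ℝ) (c : ℝ)
    (S : Set ℝ) (hS : S.Infinite) (h : ∀ t ∈ S, q.eval t ≠ 0 ∧ b ⬝ᵥ ratEv P q t = c)
    (t : ℝ) (ht : q.eval t ≠ 0) : b ⬝ᵥ ratEv P q t = c := by
  have h0 : (∑ i, C (b i) * P i + C (-c) * q) = 0 := by
    apply Polynomial.eq_zero_of_infinite_isRoot
    refine hS.mono fun s hs => ?_
    obtain ⟨h1, h2⟩ := h s hs
    have h3 := ratEv_dot P q b (-c) s h1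
    rw [h2, add_neg_cancel, eq_comm, div_eq_zero_iff] at h3
    exact h3.resolve_right h1
  have h3 := ratEv_dot P q b (-c) t ht
  rw [h0] at h3
  simp at h3
  linarith

lemma ends_cases (P : Fin 3 → ℝ[X]) (q : ℝ[X]) (a : Fin 3 → ℝ) (c w : ℝ) (hw : w ≠ 0)
    (U : Ultrafilter ℕ) (hU : (U : Filter ℕ) ≤ atTop) (t : ℕ → ℝ) (ht : ∀ n, q.eval (t n) ≠ 0)
    (hz : ∀ n, a ⬝ᵥ ratEv P q (t n) = c + n * w) :
    (U.map t : Filter ℝ) ≤ Bornology.cobounded ℝ ∨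
      ∃ τ, q.eval τ = 0 ∧ (U.map t : Filter ℝ) ≤ 𝓝[≠] τ := by
  by_cases hc : (U.map t : Filter ℝ) ≤ Bornology.cobounded ℝ
  · exact Or.inl hc
  right
  rw [Metric.cobounded_eq_cocompact, (hasBasis_cocompact).ge_iff] at hc
  push Not at hc
  obtain ⟨K, hK, hKU⟩ := hc
  have hKU' : K ∈ U.map t := by
    by_contra h
    exact hKU (Ultrafilter.compl_mem_iff_notMem.mpr h)
  obtain ⟨τ, -, hτ⟩ := hK.ultrafilter_le_nhds' _ hKU'
  have htend : Tendsto t U (𝓝 τ) := hτ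
  have hq0 : q.eval τ = 0 := by
    by_contra hq
    have hcont : ContinuousAt (fun s => a ⬝ᵥ ratEv P q s) τ := by
      simp only [ratEv, dotProduct, Fin.sum_univ_three]
      have hP : ∀ i, ContinuousAt (fun s => (P i).eval s / q.eval s) τ := fun i =>
        (P i).continuous.continuousAt.div q.continuous.continuousAt hq
      have := hP 0
      have := hP 1
      have := hP 2
      fun_prop
    have h1 := hcont.tendsto.comp htend
    simp only [Function.comp_def, hz] at h1
    have h2 : Tendsto (fun n : ℕ => (n : ℝ)) U (𝓝 ((a ⬝ᵥ ratEv P q τ - c) / w)) := by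
      have := (h1.sub_const c).div_const w
      refine this.congr fun n => ?_
      field_simp
      ring
    exact not_tendsto_nhds_of_tendsto_atTop (tendsto_natCast_atTop_atTop.mono_left hU) _ h2
  refine ⟨τ, hq0, ?_⟩
  rw [nhdsWithin]
  refine le_inf hτ ?_
  rw [le_principal_iff]
  change t ⁻¹' {τ}ᶜ ∈ (U : Filter ℕ)
  refine univ_mem' fun n => ?_
  intro h
  rw [Set.mem_singleton_iff] at h
  exact ht n (h ▸ hq0)

/-- translation case -/
lemma line_of_translation (P : Fin 3 → ℝ[X]) (q : ℝ[X]) (hq : q ≠ 0) (C : Set (Fin 3 → ℝ))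
    (hC : C = {x | ∃ t, q.eval t ≠ 0 ∧ ratEv P q t = x}) (hne : C.Nonempty)
    (w : Fin 3 → ℝ) (hw : w ≠ 0) (hT : ∀ x, x ∈ C ↔ x + w ∈ C) :
    ∃ p : Fin 3 → ℝ, C = {x | ∃ s : ℝ, x = p + s • w} := by
  obtain ⟨p, hp⟩ := hne
  have hTn : ∀ x (n : ℕ), x ∈ C ↔ x + (n : ℝ) • w ∈ C := by
    intro x n
    induction n with
    | zero => simp
    | succ k ih =>
      rw [ih, hT]
      push_cast
      rw [add_smul, one_smul, add_assoc]
  have hww : w ⬝ᵥ w ≠ 0 := by simpa [dotProduct_self_eq_zero] using hw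
  have hmem : ∀ n : ℕ, ∃ t, q.eval t ≠ 0 ∧ ratEv P q t = p + (n : ℝ) • w := by
    intro n
    have := (hTn p n).mp hp
    rw [hC] at this
    exact this
  choose t ht hev using hmem
  have htinj : Function.Injective t := by
    intro m n hmn
    have h1 := hev m
    rw [hmn, hev n] at h1
    have h2 : ((n : ℝ) - m) • w = 0 := by
      rw [sub_smul]; exact sub_eq_zero.mpr (add_left_cancel h1)
    rcases smul_eq_zero.mp h2 with h | h
    · have : (n : ℝ) = m := by linarith
      exact_mod_cast this.symm
    · exact (hw h).elim
  have hSinf : (Set.range t).Infinite := Set.infinite_range_of_injective htinj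
  have hon : ∀ x ∈ C, x = p + ((w ⬝ᵥ (x - p)) / (w ⬝ᵥ w)) • w := by
    intro x hx
    rw [hC] at hx
    obtain ⟨s, hs, rfl⟩ := hx
    set x := ratEv P q s
    set u : Fin 3 → ℝ := x - p - ((w ⬝ᵥ (x - p)) / (w ⬝ᵥ w)) • w with hu
    have huw : u ⬝ᵥ w = 0 := by
      rw [hu, sub_dotProduct, smul_dotProduct, dotProduct_comm w (x - p), smul_eq_mul]
      field_simp
      simp
    have hux : u ⬝ᵥ x = u ⬝ᵥ p := by
      refine affine_const P q u (u ⬝ᵥ p) _ hSinf ?_ s hs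
      rintro _ ⟨n, rfl⟩
      refine ⟨ht n, ?_⟩
      rw [hev, dotProduct_add, dotProduct_smul, huw]
      simp
    have huu : u ⬝ᵥ u = 0 := by
      have : u ⬝ᵥ u = u ⬝ᵥ (x - p - ((w ⬝ᵥ (x - p)) / (w ⬝ᵥ w)) • w) := by rw [← hu]
      rw [this, dotProduct_sub, dotProduct_sub, dotProduct_smul, huw, hux]
      simp
    have hu0 : u = 0 := dotProduct_self_eq_zero.mp huu
    rw [hu, sub_eq_zero, sub_eq_iff_eq_add] at hu0
    rw [add_comm]; exact hu0
  refine ⟨p, ?_⟩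
  apply Set.Subset.antisymm
  · intro x hx
    exact ⟨_, hon x hx⟩
  rintro _ ⟨s, rfl⟩
  -- pigeonhole on components
  obtain ⟨S, hS⟩ := Finite.exists_infinite_fiber
    (fun n : ℕ => (⟨q.roots.toFinset.filter (· < t n), by simp⟩ :
      {A // A ∈ q.roots.toFinset.powerset}))
  rw [Set.infinite_coe_iff] at hS
  obtain ⟨n0, hn0⟩ := hS.nonempty
  obtain ⟨k, hk⟩ := exists_nat_ge ((n0 : ℝ) - s)
  obtain ⟨m, hm⟩ := exists_nat_ge (s + k)
  obtain ⟨n1, hn1, hn1m⟩ := hS.exists_gt m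
  set h : ℝ → ℝ := fun r => (w ⬝ᵥ (ratEv P q r - p)) / (w ⬝ᵥ w) with hh
  have hhn : ∀ n, h (t n) = n := by
    intro n
    simp only [hh, hev, add_sub_cancel_left, dotProduct_smul, smul_eq_mul]
    field_simp
  have hnoroot : ∀ r ∈ Set.uIcc (t n0) (t n1), q.eval r ≠ 0 := by
    intro r hr hr0
    have hmemr : r ∈ q.roots.toFinset := by simp [hq, hr0]
    have e : q.roots.toFinset.filter (· < t n0) = q.roots.toFinset.filter (· < t n1) := by
      have := hn0.trans hn1.symm
      simpa using congrArg Subtype.val this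
    have e' : r < t n0 ↔ r < t n1 := by
      have := congrArg (fun A => r ∈ A) e
      simpa [hq, hr0] using this
    have d0 : r ≠ t n0 := by rintro rfl; exact ht _ hr0
    have d1 : r ≠ t n1 := by rintro rfl; exact ht _ hr0
    rcases Set.mem_uIcc.mp hr with ⟨h1, h2⟩ | ⟨h1, h2⟩
    · exact absurd (e'.mpr (lt_of_le_of_ne h2 d1)) (not_lt.mpr h1)
    · exact absurd (e'.mp (lt_of_le_of_ne h2 d0)) (not_lt.mpr h1)
  have hcont : ContinuousOn h (Set.uIcc (t n0) (t n1)) := by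
    have hP : ∀ i, ContinuousOn (fun s => (P i).eval s / q.eval s) (Set.uIcc (t n0) (t n1)) :=
      fun i => (P i).continuous.continuousOn.div q.continuous.continuousOn hnoroot
    have := hP 0
    have := hP 1
    have := hP 2
    simp only [hh, ratEv, dotProduct, Fin.sum_univ_three, Pi.sub_apply]
    fun_prop
  have hivt := intermediate_value_uIcc hcont
  have hin : s + k ∈ Set.uIcc (h (t n0)) (h (t n1)) := by
    rw [hhn, hhn]
    refine Set.mem_uIcc.mpr (Or.inl ⟨by linarith, ?_⟩)
    have : (m : ℝ) ≤ n1 := by exact_mod_cast hn1m.le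
    linarith
  obtain ⟨r, hr, hrs⟩ := hivt hin
  have hrC : ratEv P q r ∈ C := by
    rw [hC]; exact ⟨r, hnoroot r hr, rfl⟩
  have h5 := hon _ hrC
  have h6 : (w ⬝ᵥ (ratEv P q r - p)) / (w ⬝ᵥ w) = s + k := hrs
  rw [h6] at h5
  rw [h5, add_smul, ← add_assoc] at hrC
  exact (hTn _ k).mpr hrC

lemma line_of_screw (P : Fin 3 → ℝ[X]) (q : ℝ[X]) (hq : q ≠ 0) (C : Set (Fin 3 → ℝ))
    (hC : C = {x | ∃ t, q.eval t ≠ 0 ∧ ratEv P q t = x}) (hne : C.Nonempty)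
    (Q : Matrix (Fin 3) (Fin 3) ℝ) (hQ : Q ∈ Matrix.orthogonalGroup (Fin 3) ℝ)
    (v a : Fin 3 → ℝ) (ha : a ᵥ* Q = a) (hav : a ⬝ᵥ v ≠ 0)
    (hT : ∀ x, x ∈ C ↔ Q *ᵥ x + v ∈ C) :
    ∃ p w : Fin 3 → ℝ, w ≠ 0 ∧ C = {x | ∃ s : ℝ, x = p + s • w} := by
  obtain ⟨U, hU, hUQ⟩ := orth_recurrence Q hQ
  set N : Fin 3 → ℝ[X] := fun i =>
    ∑ j, Polynomial.C ((Q - 1) i j) * P j + Polynomial.C (v i) * q with hN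
  set y : (Fin 3 → ℝ) → Fin 3 → ℝ := fun x => Q *ᵥ x + v - x with hy
  have hyN : ∀ t, q.eval t ≠ 0 → ∀ i, y (ratEv P q t) i = (N i).eval t / q.eval t := by
    intro t ht i
    have h1 := ratEv_dot P q ((Q - 1) i) (v i) t ht
    rw [hN, ← h1]
    have h2 : (Q - 1) i ⬝ᵥ ratEv P q t = ((Q - 1) *ᵥ ratEv P q t) i := rfl
    rw [h2, sub_mulVec, one_mulVec]
    simp only [hy, Pi.add_apply, Pi.sub_apply]
    ring
  choose li hli using fun i => inf_value (N i) q
  choose le hle using fun (τ : ℝ) i => end_value (N i) q τ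
  set G : (Fin 3 → ℝ) → Fin 3 → ℝ := fun x => Q *ᵥ x + v with hG
  have hyG : ∀ x, y (G x) = Q *ᵥ (y x) := by
    intro x
    simp only [hy, hG, mulVec_add, mulVec_sub]
    abel
  have hyGn : ∀ (n : ℕ) x, y (G^[n] x) = (Q ^ n) *ᵥ (y x) := by
    intro n
    induction n with
    | zero => simp
    | succ k ih =>
      intro x
      rw [Function.iterate_succ_apply, ih, hyG, mulVec_mulVec, pow_succ]
  have haG : ∀ x, a ⬝ᵥ G x = a ⬝ᵥ x + a ⬝ᵥ v := by
    intro x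
    simp only [hG, dotProduct_add, dotProduct_mulVec, ha]
  have haGn : ∀ (n : ℕ) x, a ⬝ᵥ (G^[n] x) = a ⬝ᵥ x + n * (a ⬝ᵥ v) := by
    intro n
    induction n with
    | zero => simp
    | succ k ih =>
      intro x
      rw [Function.iterate_succ_apply, ih, haG]
      push_cast; ring
  have hGC : ∀ x ∈ C, ∀ n : ℕ, G^[n] x ∈ C := by
    intro x hx n
    induction n with
    | zero => simpa
    | succ k ih =>
      rw [Function.iterate_succ_apply']
      exact (hT _).mp ih
  -- `y` takes finitely many values on `C`
  have hfin : ∀ x ∈ C, y x ∈ insert li (le '' (q.roots.toFinset : Set ℝ)) := by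
    intro x hx
    have hmem : ∀ n : ℕ, ∃ t, q.eval t ≠ 0 ∧ ratEv P q t = G^[n] x := by
      intro n
      have := hGC x hx n
      rw [hC] at this
      exact this
    choose t ht hev using hmem
    have hlim : ∀ i, Tendsto (fun s => (N i).eval s / q.eval s) (U.map t : Filter ℝ)
        (𝓝 (y x i)) := by
      intro i
      change Tendsto ((fun s => (N i).eval s / q.eval s) ∘ t) (U : Filter ℕ) _
      have h1 : ((fun s => (N i).eval s / q.eval s) ∘ t) = fun n => ((Q ^ n) *ᵥ (y x)) i := by
        funext n
        rw [← hyGn, ← hev, hyN _ (ht n)]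
        rfl
      rw [h1]
      have hc : Continuous fun M : Matrix (Fin 3) (Fin 3) ℝ => (M *ᵥ (y x)) i := by fun_prop
      have := (hc.tendsto 1).comp hUQ
      rw [one_mulVec] at this
      exact this
    rcases ends_cases P q a (a ⬝ᵥ x) (a ⬝ᵥ v) hav U hU t ht
      (fun n => by rw [hev, haGn]) with h | ⟨τ, hτ, h⟩
    · left
      funext i
      exact hli i _ (U.map t).neBot h _ (hlim i)
    · right
      refine ⟨τ, by simp [hq, hτ], ?_⟩
      funext i
      exact (hle τ i _ (U.map t).neBot h _ (hlim i)).symm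
  have hFin : (insert li (le '' (q.roots.toFinset : Set ℝ))).Finite :=
    ((Finset.finite_toSet _).image _).insert _
  have hdom : {t : ℝ | q.eval t ≠ 0}.Infinite := by
    have : {t : ℝ | q.eval t = 0}.Finite := by
      refine (q.roots.toFinset.finite_toSet).subset fun t ht => ?_
      have ht' : q.eval t = 0 := ht
      simp [hq, ht']
    exact this.infinite_compl
  obtain ⟨w, hwinf⟩ : ∃ w, {t : ℝ | q.eval t ≠ 0 ∧ y (ratEv P q t) = w}.Infinite := by
    by_contra hcon
    push Not at hcon
    refine hdom ((hFin.biUnion (t := fun w => {t : ℝ | q.eval t ≠ 0 ∧ y (ratEv P q t) = w})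
      fun w _ => hcon w).subset fun t ht => ?_)
    have htC : ratEv P q t ∈ C := by rw [hC]; exact ⟨t, ht, rfl⟩
    exact Set.mem_biUnion (hfin _ htC) ⟨ht, rfl⟩
  have hconst : ∀ x ∈ C, y x = w := by
    intro x hx
    rw [hC] at hx
    obtain ⟨t, ht, rfl⟩ := hx
    have hyd : ∀ z i, y z i = (Q - 1) i ⬝ᵥ z + v i := by
      intro z i
      have h2 : (Q - 1) i ⬝ᵥ z = ((Q - 1) *ᵥ z) i := rfl
      rw [h2, sub_mulVec, one_mulVec]
      simp only [hy, Pi.add_apply, Pi.sub_apply]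
      ring
    funext i
    have h1 := affine_const P q ((Q - 1) i) (w i - v i) _ hwinf (by
      rintro s ⟨hs, hsw⟩
      refine ⟨hs, ?_⟩
      have := hyd (ratEv P q s) i
      rw [hsw] at this
      linarith) t ht
    rw [hyd, h1]
    ring
  have hne' := hne
  obtain ⟨x0, hx0⟩ := hne'
  have hw : w ≠ 0 := by
    rintro rfl
    have h1 := haG x0
    have h2 : G x0 - x0 = 0 := hconst x0 hx0
    rw [sub_eq_zero.mp h2] at h1
    exact hav (by linarith)
  have hGw : ∀ x ∈ C, G x = x + w := by
    intro x hx
    rw [← hconst x hx]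
    simp [hy, hG]
  have hGs : ∀ x ∈ C, ∃ z ∈ C, G z = x := by
    intro x hx
    have hQQ : Q * star Q = 1 := (Matrix.mem_orthogonalGroup_iff (Fin 3) ℝ).mp hQ
    have e : G (star Q *ᵥ (x - v)) = x := by
      simp only [hG, mulVec_mulVec, hQQ, one_mulVec, sub_add_cancel]
    refine ⟨_, (hT _).mpr ?_, e⟩
    change G _ ∈ C
    rw [e]; exact hx
  obtain ⟨p, hp⟩ := line_of_translation P q hq C hC hne w hw (by
    intro x
    constructor
    · intro hx
      rw [← hGw x hx]; exact (hT x).mp hx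
    · intro hx
      obtain ⟨z, hz, hzx⟩ := hGs _ hx
      rw [hGw z hz] at hzx
      rwa [← add_right_cancel hzx])
  exact ⟨p, w, hw, hp⟩

lemma exists_fixed (Q : Matrix (Fin 3) (Fin 3) ℝ) (hQ : Q ∈ Matrix.orthogonalGroup (Fin 3) ℝ)
    (hd : Q.det = 1) : ∃ l : Fin 3 → ℝ, l ≠ 0 ∧ Q *ᵥ l = l := by
  have hQQ : Q * Qᵀ = 1 := (Matrix.mem_orthogonalGroup_iff (Fin 3) ℝ).mp hQ
  have h0 : (Q - 1).det = 0 := by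
    have h1 : Q - 1 = Q * (-(Q - 1)ᵀ) := by
      rw [transpose_sub, transpose_one, mul_neg, mul_sub, hQQ]; simp
    have h2 := congrArg det h1
    rw [det_mul, hd, det_neg, det_transpose] at h2
    simp at h2
    linarith
  obtain ⟨l, hl, h⟩ := exists_mulVec_eq_zero_iff.mpr h0
  refine ⟨l, hl, ?_⟩
  rw [sub_mulVec, one_mulVec] at h
  exact sub_eq_zero.mp h

lemma orth_dot (Q : Matrix (Fin 3) (Fin 3) ℝ) (hQ : Q ∈ Matrix.orthogonalGroup (Fin 3) ℝ)
    (x y : Fin 3 → ℝ) : (Q *ᵥ x) ⬝ᵥ (Q *ᵥ y) = x ⬝ᵥ y := by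
  have hQQ : Qᵀ * Q = 1 := (Matrix.mem_orthogonalGroup_iff' (Fin 3) ℝ).mp hQ
  rw [dotProduct_mulVec, ← mulVec_transpose, mulVec_mulVec, hQQ, one_mulVec]

lemma cross_map (Q : Matrix (Fin 3) (Fin 3) ℝ) (hQ : Q ∈ Matrix.orthogonalGroup (Fin 3) ℝ)
    (hd : Q.det = 1) (u v : Fin 3 → ℝ) : Q *ᵥ (u ⨯₃ v) = (Q *ᵥ u) ⨯₃ (Q *ᵥ v) := by
  have hQQ : Q * Qᵀ = 1 := (Matrix.mem_orthogonalGroup_iff (Fin 3) ℝ).mp hQ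
  have hadj : Qᵀ = Q.adjugate := by
    have h1 : Q.adjugate * (Q * Qᵀ) = Q.adjugate := by rw [hQQ, mul_one]
    rw [← mul_assoc, adjugate_mul, hd, one_smul, one_mul] at h1
    exact h1
  rw [adjugate_fin_three] at hadj
  have hE : ∀ i j, Q i j = _ := fun i j => congrFun (congrFun hadj j) i
  have h00 := hE 0 0
  have h01 := hE 0 1
  have h02 := hE 0 2
  have h10 := hE 1 0
  have h11 := hE 1 1
  have h12 := hE 1 2
  have h20 := hE 2 0
  have h21 := hE 2 1
  have h22 := hE 2 2
  simp at h00 h01 h02 h10 h11 h12 h20 h21 h22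
  funext i
  fin_cases i
  · simp [cross_apply, mulVec, dotProduct, Fin.sum_univ_three]
    linear_combination (u 1 * v 2 - u 2 * v 1) * h00 + (u 2 * v 0 - u 0 * v 2) * h01
      + (u 0 * v 1 - u 1 * v 0) * h02
  · simp [cross_apply, mulVec, dotProduct, Fin.sum_univ_three]
    linear_combination (u 1 * v 2 - u 2 * v 1) * h10 + (u 2 * v 0 - u 0 * v 2) * h11
      + (u 0 * v 1 - u 1 * v 0) * h12
  · simp [cross_apply, mulVec, dotProduct, Fin.sum_univ_three]
    linear_combination (u 1 * v 2 - u 2 * v 1) * h20 + (u 2 * v 0 - u 0 * v 2) * h21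
      + (u 0 * v 1 - u 1 * v 0) * h22

lemma eq_zero_of_frame (a x r : Fin 3 → ℝ) (ha : a ≠ 0) (hx : x ≠ 0) (hax : a ⬝ᵥ x = 0)
    (h1 : a ⬝ᵥ r = 0) (h2 : x ⬝ᵥ r = 0) (h3 : (a ⨯₃ x) ⬝ᵥ r = 0) : r = 0 := by
  have haa : a ⬝ᵥ a ≠ 0 := by simpa [dotProduct_self_eq_zero] using ha
  have hxx : x ⬝ᵥ x ≠ 0 := by simpa [dotProduct_self_eq_zero] using hx
  have hdet : (of ![a, x, a ⨯₃ x]).det ≠ 0 := by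
    have : (of ![a, x, a ⨯₃ x]).det = (a ⬝ᵥ a) * (x ⬝ᵥ x) - (a ⬝ᵥ x) ^ 2 := by
      simp [det_fin_three, cross_apply, dotProduct, Fin.sum_univ_three]
      ring
    rw [this, hax]
    have := mul_ne_zero haa hxx
    intro h
    apply this
    linarith
  apply eq_zero_of_mulVec_eq_zero hdet
  funext i
  fin_cases i
  · exact h1
  · exact h2
  · exact h3

lemma ext_frame (a x : Fin 3 → ℝ) (ha : a ≠ 0) (hx : x ≠ 0) (hax : a ⬝ᵥ x = 0)
    (A B : Matrix (Fin 3) (Fin 3) ℝ) (h1 : A *ᵥ a = B *ᵥ a) (h2 : A *ᵥ x = B *ᵥ x)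
    (h3 : A *ᵥ (a ⨯₃ x) = B *ᵥ (a ⨯₃ x)) : A = B := by
  rw [← sub_eq_zero]
  have key : ∀ z, A *ᵥ z = B *ᵥ z → ∀ i, z ⬝ᵥ (A - B) i = 0 := by
    intro z hz i
    rw [dotProduct_comm]
    change ((A - B) *ᵥ z) i = 0
    rw [sub_mulVec, hz, sub_self]; rfl
  funext i
  exact eq_zero_of_frame a x _ ha hx hax (key _ h1 i) (key _ h2 i) (key _ h3 i)

lemma exists_perp (a : Fin 3 → ℝ) : ∃ x : Fin 3 → ℝ, x ≠ 0 ∧ a ⬝ᵥ x = 0 := by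
  by_cases h : a 0 = 0
  · refine ⟨![1, 0, 0], ?_, ?_⟩
    · intro h'; simpa using congrFun h' 0
    · simp [dotProduct, Fin.sum_univ_three, h]
  · refine ⟨![a 1, -a 0, 0], ?_, ?_⟩
    · intro h'; exact h (by simpa using congrFun h' 1)
    · simp [dotProduct, Fin.sum_univ_three]; ring

lemma decomp (a x z : Fin 3 → ℝ) (ha : a ≠ 0) (hx : x ≠ 0) (hax : a ⬝ᵥ x = 0) (haz : a ⬝ᵥ z = 0) :
    ∃ α β : ℝ, z = α • x + β • (a ⨯₃ x) := by
  have hxx : x ⬝ᵥ x ≠ 0 := by simpa [dotProduct_self_eq_zero] using hx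
  have haa : a ⬝ᵥ a ≠ 0 := by simpa [dotProduct_self_eq_zero] using ha
  have hJJ : (a ⨯₃ x) ⬝ᵥ (a ⨯₃ x) = (a ⬝ᵥ a) * (x ⬝ᵥ x) := by
    have : (a ⨯₃ x) ⬝ᵥ (a ⨯₃ x) = (a ⬝ᵥ a) * (x ⬝ᵥ x) - (a ⬝ᵥ x) ^ 2 := by
      simp [cross_apply, dotProduct, Fin.sum_univ_three]
      ring
    rw [this, hax]; ring
  have hxJ : x ⬝ᵥ (a ⨯₃ x) = 0 := dot_cross_self a x
  have hJx : (a ⨯₃ x) ⬝ᵥ x = 0 := by rw [dotProduct_comm]; exact hxJ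
  have haJ : a ⬝ᵥ (a ⨯₃ x) = 0 := dot_self_cross a x
  refine ⟨(x ⬝ᵥ z) / (x ⬝ᵥ x), ((a ⨯₃ x) ⬝ᵥ z) / ((a ⬝ᵥ a) * (x ⬝ᵥ x)), ?_⟩
  rw [← sub_eq_zero]
  apply eq_zero_of_frame a x _ ha hx hax
  · simp [dotProduct_sub, dotProduct_add, dotProduct_smul, hax, haz, haJ]
  · simp only [dotProduct_sub, dotProduct_add, dotProduct_smul, hxJ, smul_eq_mul]
    field_simp; ring
  · simp only [dotProduct_sub, dotProduct_add, dotProduct_smul, hJJ, hJx, smul_eq_mul]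
    field_simp; ring

lemma rot_comm (A B : Matrix (Fin 3) (Fin 3) ℝ) (hA : A ∈ Matrix.orthogonalGroup (Fin 3) ℝ)
    (hAd : A.det = 1) (hB : B ∈ Matrix.orthogonalGroup (Fin 3) ℝ)
    (hBd : B.det = 1) (a : Fin 3 → ℝ) (ha : a ≠ 0) (hAa : A *ᵥ a = a) (hBa : B *ᵥ a = a) :
    A * B = B * A := by
  obtain ⟨x, hx, hax⟩ := exists_perp a
  have hAJ : ∀ z, A *ᵥ (a ⨯₃ z) = a ⨯₃ (A *ᵥ z) := fun z => by rw [cross_map A hA hAd, hAa]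
  have hBJ : ∀ z, B *ᵥ (a ⨯₃ z) = a ⨯₃ (B *ᵥ z) := fun z => by rw [cross_map B hB hBd, hBa]
  obtain ⟨α, β, h1⟩ := decomp a x (A *ᵥ x) ha hx hax (by
    have := orth_dot A hA a x; rw [hAa] at this; rw [this, hax])
  obtain ⟨γ, δ, h2⟩ := decomp a x (B *ᵥ x) ha hx hax (by
    have := orth_dot B hB a x; rw [hBa] at this; rw [this, hax])
  have h3 : A *ᵥ (B *ᵥ x) = B *ᵥ (A *ᵥ x) := by
    rw [h2, mulVec_add, mulVec_smul, mulVec_smul, hAJ, h1, mulVec_add, mulVec_smul, mulVec_smul,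
      hBJ, h2]
    simp only [map_add, map_smul, smul_add, smul_smul]
    rw [mul_comm α γ, mul_comm α δ, mul_comm β γ, mul_comm β δ]
    abel
  apply ext_frame a x ha hx hax
  · rw [← mulVec_mulVec, ← mulVec_mulVec, hAa, hBa, hAa]
  · rw [← mulVec_mulVec, ← mulVec_mulVec, h3]
  · rw [← mulVec_mulVec, ← mulVec_mulVec, hBJ, hAJ, hAJ, hBJ, h3]

lemma rot_eq_one (A : Matrix (Fin 3) (Fin 3) ℝ) (hA : A ∈ Matrix.orthogonalGroup (Fin 3) ℝ)
    (hAd : A.det = 1) (a x : Fin 3 → ℝ) (ha : a ≠ 0) (hx : x ≠ 0) (hax : a ⬝ᵥ x = 0)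
    (hAa : A *ᵥ a = a) (hAx : A *ᵥ x = x) : A = 1 := by
  apply ext_frame a x ha hx hax
  · simp [hAa]
  · simp [hAx]
  · rw [cross_map A hA hAd, hAa, hAx, one_mulVec]

lemma fixed_left (A : Matrix (Fin 3) (Fin 3) ℝ) (hA : A ∈ Matrix.orthogonalGroup (Fin 3) ℝ)
    (a : Fin 3 → ℝ) (h : A *ᵥ a = a) : a ᵥ* A = a := by
  have hQQ : Aᵀ * A = 1 := (Matrix.mem_orthogonalGroup_iff' (Fin 3) ℝ).mp hA
  rw [← mulVec_transpose]
  nth_rewrite 1 [← h]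
  rw [mulVec_mulVec, hQQ, one_mulVec]

lemma fixed_right (A : Matrix (Fin 3) (Fin 3) ℝ) (hA : A ∈ Matrix.orthogonalGroup (Fin 3) ℝ)
    (a : Fin 3 → ℝ) (h : a ᵥ* A = a) : A *ᵥ a = a := by
  have hQQ : A * Aᵀ = 1 := (Matrix.mem_orthogonalGroup_iff (Fin 3) ℝ).mp hA
  rw [← mulVec_transpose] at h
  nth_rewrite 1 [← h]
  rw [mulVec_mulVec, hQQ, one_mulVec]

/-- parallel axes -/
lemma parallel_case (P : Fin 3 → ℝ[X]) (q : ℝ[X]) (hq : q ≠ 0) (C : Set (Fin 3 → ℝ))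
    (hC : C = {x | ∃ t, q.eval t ≠ 0 ∧ ratEv P q t = x}) (hne : C.Nonempty)
    (hnl : ¬ ∃ p w : Fin 3 → ℝ, w ≠ 0 ∧ C = {x | ∃ s : ℝ, x = p + s • w})
    (A B : Matrix (Fin 3) (Fin 3) ℝ) (hA : A ∈ Matrix.orthogonalGroup (Fin 3) ℝ)
    (hAd : A.det = 1) (hB : B ∈ Matrix.orthogonalGroup (Fin 3) ℝ)
    (hBd : B.det = 1) (hB1 : B ≠ 1) (u v p₁ p₂ : Fin 3 → ℝ)
    (hp₁ : A *ᵥ p₁ + u = p₁) (hp₂ : B *ᵥ p₂ + v = p₂)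
    (hTA : ∀ x, x ∈ C ↔ A *ᵥ x + u ∈ C) (hTB : ∀ x, x ∈ C ↔ B *ᵥ x + v ∈ C)
    (a : Fin 3 → ℝ) (ha : a ≠ 0) (hAa : A *ᵥ a = a) (hBa : B *ᵥ a = a) :
    ∃ z, A *ᵥ z + u = z ∧ B *ᵥ z + v = z := by
  have hcomm := rot_comm A B hA hAd hB hBd a ha hAa hBa
  have hBC : ∀ y, ∃ z, B *ᵥ (A *ᵥ z + u) + v = y := by
    intro y
    have hQQ : A * star A = 1 := (Matrix.mem_orthogonalGroup_iff (Fin 3) ℝ).mp hA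
    have hQB : B * star B = 1 := (Matrix.mem_orthogonalGroup_iff (Fin 3) ℝ).mp hB
    refine ⟨star A *ᵥ (star B *ᵥ (y - v) - u), ?_⟩
    simp only [mulVec_mulVec, hQQ, one_mulVec, sub_add_cancel, hQB]
  set w : Fin 3 → ℝ := (A *ᵥ v + u) - (B *ᵥ u + v) with hw
  have hrel : ∀ z, A *ᵥ (B *ᵥ z + v) + u = (B *ᵥ (A *ᵥ z + u) + v) + w := by
    intro z
    simp only [mulVec_add, mulVec_mulVec, hcomm, hw]
    abel
  by_cases hw0 : w = 0
  · have h1 := hrel p₂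
    rw [hw0, add_zero, hp₂] at h1
    set d := A *ᵥ p₂ + u - p₂ with hd
    have hBd' : B *ᵥ d = d := by
      have h2 : A *ᵥ p₂ + u = p₂ + d := by rw [hd]; abel
      rw [h2, mulVec_add] at h1
      have h3 : p₂ + d = p₂ + B *ᵥ d := by
        rw [h1]; nth_rewrite 2 [← hp₂]; abel
      exact (add_left_cancel h3).symm
    have had : a ⬝ᵥ d = 0 := by
      have h2 : d = A *ᵥ (p₂ - p₁) - (p₂ - p₁) := by
        have hu : u = p₁ - A *ᵥ p₁ := eq_sub_of_add_eq' hp₁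
        rw [hd, mulVec_sub, hu]; abel
      rw [h2, dotProduct_sub, dotProduct_mulVec, fixed_left A hA a hAa, sub_self]
    have hd0 : d = 0 := by
      by_contra hd0
      exact hB1 (rot_eq_one B hB hBd a d ha hd0 had hBa hBd')
    exact ⟨p₂, sub_eq_zero.mp hd0, hp₂⟩
  · exfalso
    apply hnl
    obtain ⟨p, hp⟩ := line_of_translation P q hq C hC hne w hw0 (by
      intro y
      obtain ⟨z, rfl⟩ := hBC y
      rw [← hrel, ← hTB, ← hTA, ← hTA, ← hTB])
    exact ⟨p, w, hw0, hp⟩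

lemma core_case (P : Fin 3 → ℝ[X]) (q : ℝ[X]) (hq : q ≠ 0) (C : Set (Fin 3 → ℝ))
    (hC : C = {x | ∃ t, q.eval t ≠ 0 ∧ ratEv P q t = x}) (hne : C.Nonempty)
    (hnl : ¬ ∃ p w : Fin 3 → ℝ, w ≠ 0 ∧ C = {x | ∃ s : ℝ, x = p + s • w})
    (A B : Matrix (Fin 3) (Fin 3) ℝ) (hA : A ∈ Matrix.orthogonalGroup (Fin 3) ℝ)
    (hAd : A.det = 1) (hB : B ∈ Matrix.orthogonalGroup (Fin 3) ℝ)
    (hBd : B.det = 1) (hB1 : B ≠ 1) (u v p₁ p₂ : Fin 3 → ℝ)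
    (hp₁ : A *ᵥ p₁ + u = p₁) (hp₂ : B *ᵥ p₂ + v = p₂)
    (hTA : ∀ x, x ∈ C ↔ A *ᵥ x + u ∈ C) (hTB : ∀ x, x ∈ C ↔ B *ᵥ x + v ∈ C) :
    ∃ z, A *ᵥ z + u = z ∧ B *ᵥ z + v = z := by
  have hpar := parallel_case P q hq C hC hne hnl A B hA hAd hB hBd hB1 u v p₁ p₂ hp₁ hp₂ hTA hTB
  obtain ⟨l₁, hl₁, hAl⟩ := exists_fixed A hA hAd
  obtain ⟨l₂, hl₂, hBl⟩ := exists_fixed B hB hBd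
  have hAB : A * B ∈ Matrix.orthogonalGroup (Fin 3) ℝ := mul_mem hA hB
  obtain ⟨a, ha, hABa⟩ := exists_fixed (A * B) hAB (by rw [det_mul, hAd, hBd, one_mul])
  have hal := fixed_left (A * B) hAB a hABa
  have hdB : a ᵥ* A = B *ᵥ a := by
    have hQQ : Aᵀ * A = 1 := (Matrix.mem_orthogonalGroup_iff' (Fin 3) ℝ).mp hA
    rw [← mulVec_transpose]
    nth_rewrite 1 [← hABa]
    rw [← mulVec_mulVec, mulVec_mulVec, hQQ, one_mulVec]
  set d := a ᵥ* A - a with hd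
  by_cases hd0 : d = 0
  · have h1 : a ᵥ* A = a := sub_eq_zero.mp hd0
    exact hpar a ha (fixed_right A hA a h1) (by rw [← hdB, h1])
  have hu : u = p₁ - A *ᵥ p₁ := eq_sub_of_add_eq' hp₁
  have hv : v = p₂ - B *ᵥ p₂ := eq_sub_of_add_eq' hp₂
  have hav : a ⬝ᵥ (A *ᵥ v + u) = d ⬝ᵥ (p₂ - p₁) := by
    rw [hu, hv, hd, mulVec_sub, mulVec_mulVec]
    simp only [dotProduct_add, dotProduct_sub, sub_dotProduct, dotProduct_mulVec, hal]
    ring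
  by_cases hdp : d ⬝ᵥ (p₂ - p₁) = 0
  · have hd1 : d ⬝ᵥ l₁ = 0 := by
      rw [hd, sub_dotProduct, ← dotProduct_mulVec, hAl, sub_self]
    have hd2 : d ⬝ᵥ l₂ = 0 := by
      have := orth_dot B hB a l₂
      rw [hBl] at this
      rw [hd, sub_dotProduct, hdB, this, sub_self]
    have hdet : (of ![p₂ - p₁, l₁, l₂]).det = 0 := by
      rw [← exists_mulVec_eq_zero_iff]
      refine ⟨d, hd0, ?_⟩
      funext i
      fin_cases i
      · change (p₂ - p₁) ⬝ᵥ d = 0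
        rw [dotProduct_comm]; exact hdp
      · change l₁ ⬝ᵥ d = 0
        rw [dotProduct_comm]; exact hd1
      · change l₂ ⬝ᵥ d = 0
        rw [dotProduct_comm]; exact hd2
    obtain ⟨c, hc0, hc⟩ := exists_vecMul_eq_zero_iff.mpr hdet
    have hc' : c 0 • (p₂ - p₁) + c 1 • l₁ + c 2 • l₂ = 0 := by
      funext i
      have := congrFun hc i
      simpa [vecMul, dotProduct, Fin.sum_univ_three] using this
    by_cases h0 : c 0 = 0
    · rw [h0, zero_smul, zero_add] at hc'
      have h1 : c 1 ≠ 0 := by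
        intro h1
        rw [h1, zero_smul, zero_add] at hc'
        have h2 : c 2 = 0 := (smul_eq_zero.mp hc').resolve_right hl₂
        apply hc0
        funext i
        fin_cases i
        · exact h0
        · exact h1
        · exact h2
      have h3 : l₁ = (-(c 2) / c 1) • l₂ := by
        have : c 1 • l₁ = (-(c 2)) • l₂ := by rw [neg_smul]; exact eq_neg_of_add_eq_zero_left hc'
        rw [div_eq_inv_mul, mul_smul, ← this, smul_smul, inv_mul_cancel₀ h1, one_smul]
      exact hpar l₁ hl₁ hAl (by rw [h3, mulVec_smul, hBl])
    · refine ⟨p₁ + (-(c 1) / c 0) • l₁, ?_, ?_⟩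
      · rw [mulVec_add, mulVec_smul, hAl, hu]; abel
      · have h3 : p₁ + (-(c 1) / c 0) • l₁ = p₂ + (c 2 / c 0) • l₂ := by
          funext i
          have := congrFun hc' i
          simp at this ⊢
          field_simp
          linarith
        rw [h3, mulVec_add, mulVec_smul, hBl, hv]; abel
  · exfalso
    apply hnl
    apply line_of_screw P q hq C hC hne (A * B) hAB (A *ᵥ v + u) a hal (by rw [hav]; exact hdp)
    intro x
    have : (A * B) *ᵥ x + (A *ᵥ v + u) = A *ᵥ (B *ᵥ x + v) + u := by
      rw [mulVec_add, mulVec_mulVec, add_assoc]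
    rw [this, ← hTA, ← hTB]

end Helpers

/-- Let `C ⊆ ℝ³` be an infinite rational space curve that is not a line,
invariant under two rotations `f₁`, `f₂` of `ℝ³` with axes `L₁`, `L₂`. Then `L₁` and `L₂` are
not skew: either `L₁ = L₂` or `L₁ ∩ L₂ ≠ ∅`. -/
theorem statement_11 (X : RatParam 3) (C : Set (EuclideanSpace ℝ (Fin 3)))
    (hC : C = X.curve) (hCinf : C.Infinite) (hline : ¬ IsLine C)
    (f₁ f₂ : EuclideanSpace ℝ (Fin 3) → EuclideanSpace ℝ (Fin 3))
    (h₁ : IsRotation f₁) (h₂ : IsRotation f₂)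
    (L₁ L₂ : Set (EuclideanSpace ℝ (Fin 3)))
    (hL₁ : L₁ = {x | f₁ x = x}) (hL₂ : L₂ = {x | f₂ x = x})
    (hinv₁ : f₁ '' C = C) (hinv₂ : f₂ '' C = C) :
    L₁ = L₂ ∨ (L₁ ∩ L₂).Nonempty := by
  have hq : (∏ j, X.q j) ≠ 0 := Finset.prod_ne_zero_iff.mpr fun j _ => X.q_ne_zero j
  set q : ℝ[X] := ∏ j, X.q j with hqdef
  set P : Fin 3 → ℝ[X] := fun i => X.p i * ∏ j ∈ Finset.univ.erase i, X.q j with hP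
  have hqe : ∀ t, q.eval t ≠ 0 ↔ ∀ i, (X.q i).eval t ≠ 0 := by
    intro t
    rw [hqdef, eval_prod, Finset.prod_ne_zero_iff]
    simp
  have hev : ∀ t, q.eval t ≠ 0 → WithLp.toLp 2 (ratEv P q t) = X.eval t := by
    intro t ht
    ext i
    have hsplit : q = X.q i * ∏ j ∈ Finset.univ.erase i, X.q j :=
      (Finset.mul_prod_erase _ _ (Finset.mem_univ i)).symm
    have h1 : (∏ j ∈ Finset.univ.erase i, X.q j).eval t ≠ 0 := by
      intro h
      apply ht
      rw [hsplit, eval_mul, h, mul_zero]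
    simp only [ratEv, RatParam.eval, hP]
    rw [hsplit, eval_mul, eval_mul, mul_div_mul_right _ _ h1]
  set D : Set (Fin 3 → ℝ) := {x | WithLp.toLp 2 x ∈ C} with hD
  have hDC : D = {x | ∃ t, q.eval t ≠ 0 ∧ ratEv P q t = x} := by
    ext x
    simp only [hD, hC, RatParam.curve, Set.mem_ofPred_eq, Set.mem_image, RatParam.domain]
    constructor
    · rintro ⟨t, ht, h⟩
      have ht' := (hqe t).mpr ht
      refine ⟨t, ht', ?_⟩
      rw [← hev t ht'] at h
      exact WithLp.toLp_injective 2 h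
    · rintro ⟨t, ht, rfl⟩
      exact ⟨t, (hqe t).mp ht, (hev t ht).symm⟩
  have hne : D.Nonempty := by
    obtain ⟨x, hx⟩ := hCinf.nonempty
    exact ⟨x.ofLp, hx⟩
  have hnl : ¬ ∃ p w : Fin 3 → ℝ, w ≠ 0 ∧ D = {x | ∃ s : ℝ, x = p + s • w} := by
    rintro ⟨p, w, hw, h⟩
    apply hline
    refine ⟨WithLp.toLp 2 p, WithLp.toLp 2 w, ?_, ?_⟩
    · intro h0
      exact hw (WithLp.toLp_injective 2 h0)
    · ext x
      have h1 : x ∈ C ↔ x.ofLp ∈ D := Iff.rfl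
      rw [h1, h]
      constructor
      · rintro ⟨s, hs⟩
        exact ⟨s, by ext i; simpa using congrFun hs i⟩
      · rintro ⟨s, rfl⟩
        exact ⟨s, rfl⟩
  obtain ⟨⟨A, u, hA, hAd, hf₁⟩, hid₁, p₁, hp₁⟩ := h₁
  obtain ⟨⟨B, v, hB, hBd, hf₂⟩, hid₂, p₂, hp₂⟩ := h₂
  have hF₁ : ∀ x, (f₁ x).ofLp = A *ᵥ x.ofLp + u.ofLp := fun x => funext fun i => hf₁ x i
  have hF₂ : ∀ x, (f₂ x).ofLp = B *ᵥ x.ofLp + v.ofLp := fun x => funext fun i => hf₂ x i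
  have hinj : ∀ (f : EuclideanSpace ℝ (Fin 3) → EuclideanSpace ℝ (Fin 3))
      (Q : Matrix (Fin 3) (Fin 3) ℝ) (w : EuclideanSpace ℝ (Fin 3)),
      Q ∈ Matrix.orthogonalGroup (Fin 3) ℝ → (∀ x, (f x).ofLp = Q *ᵥ x.ofLp + w.ofLp) →
      f '' C = C → ∀ x, x ∈ D ↔ Q *ᵥ x + w.ofLp ∈ D := by
    intro f Q w hQ hf hfC x
    have hQQ : Qᵀ * Q = 1 := (Matrix.mem_orthogonalGroup_iff' (Fin 3) ℝ).mp hQ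
    have hi : Function.Injective f := by
      intro a b hab
      have h1 := hf a
      rw [hab, hf b] at h1
      have h2 := congrArg (fun z => Qᵀ *ᵥ z) (add_right_cancel h1)
      simp only [mulVec_mulVec, hQQ, one_mulVec] at h2
      exact (WithLp.ofLp_injective 2 h2).symm
    have h3 : WithLp.toLp 2 (Q *ᵥ x + w.ofLp) = f (WithLp.toLp 2 x) :=
      WithLp.ofLp_injective 2 (hf _).symm
    change WithLp.toLp 2 x ∈ C ↔ WithLp.toLp 2 (Q *ᵥ x + w.ofLp) ∈ C
    rw [h3]
    conv_rhs => rw [← hfC]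
    exact (hi.mem_set_image).symm
  have hB1 : B ≠ 1 := by
    rintro rfl
    apply hid₂
    have h1 := hF₂ p₂
    rw [hp₂, one_mulVec] at h1
    have hv0 : v.ofLp = 0 := by simpa using h1
    funext x
    apply WithLp.ofLp_injective 2
    rw [hF₂, hv0, one_mulVec, add_zero]; rfl
  obtain ⟨z, hz₁, hz₂⟩ := core_case P q hq D hDC hne hnl A B hA hAd hB hBd hB1 u.ofLp v.ofLp
    p₁.ofLp p₂.ofLp (by rw [← hF₁, hp₁]) (by rw [← hF₂, hp₂])
    (hinj f₁ A u hA hF₁ hinv₁) (hinj f₂ B v hB hF₂ hinv₂)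
  right
  refine ⟨WithLp.toLp 2 z, ?_, ?_⟩
  · rw [hL₁]
    exact WithLp.ofLp_injective 2 ((hF₁ _).trans hz₁)
  · rw [hL₂]
    exact WithLp.ofLp_injective 2 ((hF₂ _).trans hz₂)
end
end
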